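/- arXiv:1504.03227 — 2 statements merged into one kernel-verified Lean document; each statement's English description precedes it below -/
import Mathlib

section
/- Let n be an even integer and p > n+2 a prime. Then the sum of 1/(l_1⋯l_n) over all n-tuples of positive integers with l_1+⋯+l_n = 3p and each l_i coprime to p is congruent modulo p to (n!/6)·Σ_{a odd, 3 ≤ a ≤ n-3} (2n - a + 3)·B_{p-a}·B_{p-n+a}/(a(n-a)). -/
/-- `x ≡ y (mod p^r)` as p-integral rationals. -/
def ratCong (p r : ℕ) (x y : ℚ) : Prop :=
  ∃ z : ℚ, x - y = (p : ℚ) ^ r * z ∧ ¬ (p ∣ z.den)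

/-- Sum of `1/(l₁⋯lₙ)` over positive `n`-tuples summing to `N` with each `lᵢ` coprime to `p`. -/
def hsum (p n N : ℕ) : ℚ :=
  ∑ l ∈ (Fintype.piFinset fun _ : Fin n => Finset.Icc 1 N) |>.filter
      (fun l => ∑ i, l i = N ∧ ∀ i, ¬ p ∣ l i),
    ∏ i, (1 : ℚ) / l i

/-!
Since `exp (T ∑ xˡ / l)`, the sum running over the `l` prime to `p`, equals
`(1 - x)^(-T) (1 - xᵖ)^(T / p)`, the sum `hsum p n N` is `n!` times the coefficient of `Tⁿ x^N` in
this product. For `N = 3 p` the coefficient of `x^N` is built from the blocks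
`(T + p m + 1) ⋯ (T + p m + p - 1)`, `m < 3`. Divided by its constant term at `m = 0`, the block of
index `m` is `f (T + p m)`, where `f ≡ 1 + p q` up to terms of high order in `(p, T)`. Expanding
modulo `p⁴` leaves `p³` times an explicit polynomial in `q`. By Newton's identities and Faulhaber's
formula the coefficient of `q` at `T^(a - 1)` is `-B_{p - a} / a` modulo `p`, which vanishes unless
`a` is odd. For even `n` only `q²` therefore contributes, and the symmetry `a ↔ n - a` produces the
weights `2 n - a + 3`.
-/

open Finset hiding mk
open scoped Nat Polynomial

section GeneratingFunction

open PowerSeries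

section CommRing

variable {R : Type*} [CommRing R]

lemma derivative_expand {p : ℕ} (hp : p ≠ 0) (f : R⟦X⟧) :
    d⁄dX R (f.expand p hp) = (d⁄dX R f).expand p hp * ((p : R⟦X⟧) * X ^ (p - 1)) := by
  simp_rw [expand_apply]
  rw [derivative_subst (HasSubst.X_pow hp), derivative_pow, derivative_X, mul_one]

lemma coeff_mul_expand {p : ℕ} (hp : p ≠ 0) (f g : R⟦X⟧) (k : ℕ) :
    coeff (p * k) (f * g.expand p hp) =
      ∑ ij ∈ antidiagonal k, coeff (p * ij.1) f * coeff ij.2 g := by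
  rw [coeff_mul]
  symm
  refine sum_of_injOn (fun ij => (p * ij.1, p * ij.2)) ?_ ?_ ?_ ?_
  · rintro ⟨i, j⟩ - ⟨i', j'⟩ - h
    simpa [hp] using h
  · rintro ⟨i, j⟩ hij
    rw [mem_coe, HasAntidiagonal.mem_antidiagonal] at hij ⊢
    rw [← mul_add, hij]
  · rintro ⟨i, j⟩ hij hnot
    rw [coeff_expand_of_not_dvd, mul_zero]
    rintro ⟨j, rfl⟩
    rw [HasAntidiagonal.mem_antidiagonal] at hij
    obtain ⟨i, rfl⟩ : p ∣ i := (Nat.dvd_add_left (dvd_mul_right p j)).1 ⟨k, hij⟩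
    rw [← mul_add] at hij
    refine hnot ⟨(i, j), ?_, rfl⟩
    simpa [hp] using hij
  · simp

lemma factorial_mul_mk_coeff [IsAddTorsionFree R] {f : R⟦X⟧} {G : R[X]⟦X⟧}
    (hf : constantCoeff f = 0) (hG : constantCoeff G = 1)
    (hfG : d⁄dX R[X] G = C Polynomial.X * map Polynomial.C (d⁄dX R f) * G) (n : ℕ) :
    n ! * mk (fun N => (coeff N G).coeff n) = f ^ n := by
  have derivative_mk (m : ℕ) : d⁄dX R (mk fun N => (coeff N G).coeff m) =
      mk fun N => (coeff N (d⁄dX R[X] G)).coeff m := by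
    ext N
    have : (N + 1 : R[X]) = Polynomial.C (N + 1 : R) := by simp
    rw [coeff_derivative, coeff_mk, coeff_mk, coeff_derivative, this, Polynomial.coeff_mul_C]
  rw [← coeff_zero_eq_constantCoeff_apply] at hG
  induction n with
  | zero =>
    rw [Nat.factorial_zero, Nat.cast_one, one_mul, pow_zero]
    refine derivative.ext ?_ ?_
    · ext N
      rw [derivative_mk, hfG, coeff_mk, mul_assoc, coeff_C_mul, Polynomial.coeff_X_mul_zero,
        derivative_one, map_zero]
    · rw [← coeff_zero_eq_constantCoeff_apply, coeff_mk, hG, Polynomial.coeff_one_zero, map_one]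
  | succ n ih =>
    have derivative_succ : d⁄dX R (mk fun N => (coeff N G).coeff (n + 1)) =
        d⁄dX R f * mk fun N => (coeff N G).coeff n := by
      rw [derivative_mk, hfG]
      ext N
      simp_rw [coeff_mk, mul_assoc, coeff_C_mul, Polynomial.coeff_X_mul, coeff_mul,
        Polynomial.finsetSum_coeff, coeff_map, Polynomial.coeff_C_mul, coeff_mk]
    refine derivative.ext ?_ ?_
    · rw [← nsmul_eq_mul, map_nsmul, derivative_succ, derivative_pow, Nat.add_sub_cancel, ← ih,
        Nat.factorial_succ, nsmul_eq_mul]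
      push_cast
      ring
    · rw [map_mul, map_pow, hf, ← coeff_zero_eq_constantCoeff_apply (mk _), coeff_mk, hG,
        Polynomial.coeff_one, if_neg n.succ_ne_zero, mul_zero, zero_pow n.succ_ne_zero]

end CommRing

section NegBinomialSeries

variable {R : Type*} [CommRing R] [BinomialRing R]

/-- The power series `(1 - x) ^ (-s)`. -/
noncomputable def negBinomialSeries (s : R) : R⟦X⟧ :=
  mk fun N => Ring.multichoose s N

lemma factorial_mul_multichoose (s : R) (N : ℕ) :
    (N ! : R) * Ring.multichoose s N = ∏ i ∈ range N, (s + i) := by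
  rw [← nsmul_eq_mul, Ring.factorial_nsmul_multichoose_eq_ascPochhammer]
  induction N with
  | zero => simp
  | succ N ih => simp [ascPochhammer_succ_right, Polynomial.smeval_mul, prod_range_succ, ih,
      Polynomial.smeval_natCast, Polynomial.smeval_X]

lemma succ_mul_multichoose_succ (s : R) (N : ℕ) :
    (N + 1 : R) * Ring.multichoose s (N + 1) = (s + N) * Ring.multichoose s N := by
  have := BinomialRing.toIsAddTorsionFree (R := R)
  apply nsmul_right_injective N.factorial_ne_zero
  have hN' := factorial_mul_multichoose s (N + 1)
  rw [prod_range_succ, ← factorial_mul_multichoose s N, Nat.factorial_succ] at hN'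
  push_cast at hN'
  simp only [nsmul_eq_mul]
  linear_combination hN'

lemma constantCoeff_negBinomialSeries (s : R) : constantCoeff (negBinomialSeries s) = 1 := by
  rw [negBinomialSeries, ← coeff_zero_eq_constantCoeff_apply, coeff_mk,
    Ring.multichoose_zero_right]

lemma derivative_negBinomialSeries (s : R) :
    d⁄dX R (negBinomialSeries s) = C s * mk 1 * negBinomialSeries s := by
  have ode : d⁄dX R (negBinomialSeries s) * (1 - X) = C s * negBinomialSeries s := by
    ext (_ | N)
    · rw [mul_sub, mul_one, map_sub, coeff_zero_mul_X, coeff_C_mul, coeff_derivative]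
      simp [negBinomialSeries, -coeff_zero_eq_constantCoeff]
    · have := succ_mul_multichoose_succ s (N + 1)
      push_cast at this
      simp only [negBinomialSeries, mul_sub, mul_one, map_sub, coeff_succ_mul_X, coeff_C_mul,
        coeff_derivative, coeff_mk]
      push_cast
      linear_combination this
  have hgeom : mk 1 * (1 - X) = (1 : R⟦X⟧) := mk_one_mul_one_sub_eq_one R
  linear_combination mk 1 * ode - d⁄dX R (negBinomialSeries s) * hgeom

lemma derivative_negBinomialSeries_mul_expand {p : ℕ} (hp : p ≠ 0) (s t : R) :
    d⁄dX R (negBinomialSeries s * (negBinomialSeries t).expand p hp) =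
      (C s * mk 1 + C (p * t) * X ^ (p - 1) * (mk 1).expand p hp) *
        (negBinomialSeries s * (negBinomialSeries t).expand p hp) := by
  rw [Derivation.leibniz, derivative_expand, derivative_negBinomialSeries,
    derivative_negBinomialSeries, map_mul, map_mul, expand_C, smul_eq_mul, smul_eq_mul, map_mul,
    map_natCast]
  ring

end NegBinomialSeries

section Field

variable (K : Type*) [Field K]

/-- The power series `∑ x ^ l / l` over the positive integers `l` prime to `p`. -/
noncomputable def primeToLogSeries (p : ℕ) : K⟦X⟧ := mk fun l => if p ∣ l then 0 else (l : K)⁻¹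

variable {K}

lemma derivative_primeToLogSeries [CharZero K] {p : ℕ} (hp : p ≠ 0) :
    d⁄dX K (primeToLogSeries K p) = mk 1 - X ^ (p - 1) * (mk 1).expand p hp := by
  have hlog : d⁄dX K (mk fun l => (l : K)⁻¹) = mk 1 := by
    ext N
    rw [coeff_derivative, coeff_mk, coeff_mk, ← Nat.cast_succ,
      inv_mul_cancel₀ (Nat.cast_ne_zero.2 N.succ_ne_zero), Pi.one_apply]
  have hp' : C (p : K)⁻¹ * (p : K⟦X⟧) = 1 := by
    rw [← map_natCast (C (R := K)), ← map_mul, inv_mul_cancel₀ (Nat.cast_ne_zero.2 hp), map_one]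
  have h : primeToLogSeries K p =
      mk (fun l => (l : K)⁻¹) - C (p : K)⁻¹ * (mk fun l => (l : K)⁻¹).expand p hp := by
    ext N
    rw [primeToLogSeries, map_sub, coeff_C_mul, coeff_mk, coeff_mk, coeff_expand]
    split_ifs with hN
    · obtain ⟨k, rfl⟩ := hN
      rw [Nat.mul_div_cancel_left _ (Nat.pos_of_ne_zero hp), coeff_mk, Nat.cast_mul, mul_inv,
        sub_self]
    · rw [mul_zero, sub_zero]
  rw [h, map_sub, Derivation.leibniz, derivative_C, derivative_expand, hlog, smul_zero, add_zero,
    smul_eq_mul]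
  linear_combination -(X ^ (p - 1) * (mk 1).expand p hp) * hp'

lemma hsum_cast [CharZero K] (p n N : ℕ) :
    (hsum p n N : K) = coeff N (primeToLogSeries K p ^ n) := by
  classical
  have hpow : primeToLogSeries K p ^ n = ∏ _i : Fin n, primeToLogSeries K p := by simp
  rw [hpow, coeff_prod, hsum, Rat.cast_sum]
  refine sum_bij_ne_zero (fun l _ _ => Finsupp.equivFunOnFinite.symm l) ?_ ?_ ?_ ?_
  · intro l hl _
    simpa using (mem_filter.1 hl).2.1
  · intro l _ _ l' _ _ h
    exact Finsupp.equivFunOnFinite.symm.injective h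
  · intro l hl hne
    have hndvd (i : Fin n) : ¬ p ∣ l i := fun hi =>
      prod_ne_zero_iff.1 hne i (mem_univ i) (by rw [primeToLogSeries, coeff_mk, if_pos hi])
    rw [mem_finsuppAntidiag] at hl
    have hmem (i : Fin n) : l i ∈ Icc 1 N := mem_Icc.2
      ⟨Nat.pos_of_ne_zero fun h0 => hndvd i (h0 ▸ dvd_zero p),
        hl.1 ▸ single_le_sum (f := l) (fun _ _ => Nat.zero_le _) (mem_univ i)⟩
    refine ⟨l, mem_filter.2 ⟨Fintype.mem_piFinset.2 hmem, hl.1, hndvd⟩, ?_, ?_⟩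
    · exact_mod_cast prod_ne_zero_iff.2 fun i _ => one_div_ne_zero
        (Nat.cast_ne_zero.2 (Nat.one_le_iff_ne_zero.1 (mem_Icc.1 (hmem i)).1))
    · simp
  · intro l hl _
    have hndvd := (mem_filter.1 hl).2.2
    simp [primeToLogSeries, hndvd]

variable (K) in
/-- The power series `(1 - x) ^ (-T) * (1 - x ^ p) ^ (T / p)`, which is the exponential of
`T * primeToLogSeries K p`. -/
noncomputable def expPrimeToLogSeries [CharZero K] {p : ℕ} (hp : p ≠ 0) : K[X]⟦X⟧ :=
  negBinomialSeries (Polynomial.X : K[X]) *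
    (negBinomialSeries (-Polynomial.C (p : K)⁻¹ * Polynomial.X)).expand p hp

lemma natCast_mul_C_inv [CharZero K] {p : ℕ} (hp : p ≠ 0) :
    (p : K[X]) * Polynomial.C (p : K)⁻¹ = 1 := by
  rw [← map_natCast (Polynomial.C (R := K)), ← map_mul, mul_inv_cancel₀ (Nat.cast_ne_zero.2 hp),
    map_one]

lemma derivative_expPrimeToLogSeries [CharZero K] {p : ℕ} (hp : p ≠ 0) :
    d⁄dX K[X] (expPrimeToLogSeries K hp) =
      C Polynomial.X * map Polynomial.C (d⁄dX K (primeToLogSeries K p)) *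
        expPrimeToLogSeries K hp := by
  have hmap : map (Polynomial.C (R := K)) (mk 1 - X ^ (p - 1) * (mk 1).expand p hp) =
      mk 1 - X ^ (p - 1) * (mk 1).expand p hp := by
    have hmk : map (Polynomial.C (R := K)) (mk 1) = mk 1 := by ext; simp
    rw [map_sub, hmk, map_mul, map_pow, map_X, map_expand, hmk]
  have hT : (p : K[X]) * (-Polynomial.C (p : K)⁻¹ * Polynomial.X) = -Polynomial.X := by
    linear_combination -Polynomial.X * natCast_mul_C_inv (K := K) hp
  rw [expPrimeToLogSeries, derivative_negBinomialSeries_mul_expand, derivative_primeToLogSeries hp,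
    hmap, hT, map_neg]
  ring

lemma hsum_eq_factorial_mul_coeff [CharZero K] {p : ℕ} (hp : p ≠ 0) (n N : ℕ) :
    (hsum p n N : K) = n ! * (coeff N (expPrimeToLogSeries K hp)).coeff n := by
  have hlog : constantCoeff (primeToLogSeries K p) = 0 := by
    rw [primeToLogSeries, ← coeff_zero_eq_constantCoeff_apply, coeff_mk, if_pos (dvd_zero p)]
  have hexp : constantCoeff (expPrimeToLogSeries K hp) = 1 := by
    rw [expPrimeToLogSeries, map_mul, constantCoeff_expand, constantCoeff_negBinomialSeries,
      constantCoeff_negBinomialSeries, mul_one]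
  rw [hsum_cast, ← factorial_mul_mk_coeff hlog hexp (derivative_expPrimeToLogSeries hp) n,
    ← nsmul_eq_mul, map_nsmul, coeff_mk, nsmul_eq_mul]

end Field

end GeneratingFunction

section Blocks

open Polynomial

section CommRing

variable (A : Type*) [CommRing A]

/-- The polynomial `(T + 1) ⋯ (T + p - 1)`. -/
noncomputable def risingPoly (p : ℕ) : A[X] :=
  ∏ i ∈ range (p - 1), (X + C (i + 1 : A))

variable {A}

lemma mul_aeval_risingPoly {B : Type*} [CommRing B] [Algebra A B] {p : ℕ} (hp : p ≠ 0) (x : B) :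
    x * aeval x (risingPoly A p) = ∏ i ∈ range p, (x + i) := by
  obtain ⟨q, rfl⟩ := Nat.exists_eq_succ_of_ne_zero hp
  simp [risingPoly, prod_range_succ', mul_comm]

lemma add_mul_eval_risingPoly {p : ℕ} (hp : p ≠ 0) (x : A) :
    (x + p) * (risingPoly A p).eval x = ∏ i ∈ range p, (x + (i + 1)) := by
  obtain ⟨q, rfl⟩ := Nat.exists_eq_succ_of_ne_zero hp
  simp [risingPoly, eval_prod, prod_range_succ, mul_comm]

lemma prod_range_mul {M : Type*} [CommMonoid M] (f : ℕ → M) (p k : ℕ) :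
    ∏ i ∈ range (p * k), f i = ∏ m ∈ range k, ∏ i ∈ range p, f (p * m + i) := by
  induction k with
  | zero => simp
  | succ k ih => rw [mul_add_one, prod_range_add, ih, prod_range_succ]

lemma prod_range_mul_X_add {p : ℕ} (hp : p ≠ 0) (k : ℕ) :
    ∏ i ∈ range (p * k), (X + (i : A[X])) =
      ∏ m ∈ range k, (X + C (p * m : A)) * taylor (p * m : A) (risingPoly A p) := by
  rw [prod_range_mul]
  refine prod_congr rfl fun m _ => ?_
  rw [taylor_apply, comp_eq_aeval, mul_aeval_risingPoly hp]
  simp [add_assoc]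

lemma factorial_mul_eq {p : ℕ} (hp : p ≠ 0) (k : ℕ) :
    ((p * k)! : A) = p ^ k * k ! * ∏ m ∈ range k, (risingPoly A p).eval (p * m : A) := by
  rw [← prod_range_add_one_eq_factorial, prod_range_mul, ← prod_range_add_one_eq_factorial,
    ← card_range k, ← prod_const, card_range]
  push_cast
  rw [← prod_mul_distrib, ← prod_mul_distrib]
  refine prod_congr rfl fun m _ => ?_
  rw [mul_add_one, add_mul_eval_risingPoly hp]
  simp only [add_assoc]

lemma eval_natCast_risingPoly_ne_zero [CharZero A] [IsDomain A] (p m : ℕ) :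
    (risingPoly A p).eval (m : A) ≠ 0 := by
  rw [risingPoly, eval_prod]
  exact prod_ne_zero_iff.2 fun i _ => by
    rw [eval_add, eval_X, eval_C]
    exact_mod_cast (m + i).succ_ne_zero

/-- For `x = T` and `c = p`, and `S m` the normalised block `(T + pm + 1) ⋯ (T + pm + p - 1)`,
this is `p ^ k * k !` times the coefficient of `x ^ (p * k)` in
`(1 - x) ^ (-T) * (1 - x ^ p) ^ (T / p)`. -/
def blockSum (c x : A) (S : ℕ → A) (k : ℕ) : A :=
  ∑ ij ∈ antidiagonal k, k.choose ij.1 *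
    ((∏ m ∈ range ij.1, (x + c * m) * S m) * ∏ l ∈ range ij.2, (c * l - x))

lemma map_blockSum {B : Type*} [CommRing B] (f : A →+* B) (c x : A) (S : ℕ → A) (k : ℕ) :
    f (blockSum c x S k) = blockSum (f c) (f x) (fun m => f (S m)) k := by
  simp [blockSum]

lemma prod_sub_prod_mem {ι : Type*} {I : Ideal A} (s : Finset ι) {f g : ι → A}
    (h : ∀ i ∈ s, f i - g i ∈ I) : ∏ i ∈ s, f i - ∏ i ∈ s, g i ∈ I := by
  rw [← Ideal.Quotient.eq, map_prod, map_prod]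
  exact prod_congr rfl fun i hi => Ideal.Quotient.eq.2 (h i hi)

lemma prod_mem_pow {ι : Type*} {I : Ideal A} (s : Finset ι) {f : ι → A} (h : ∀ i ∈ s, f i ∈ I) :
    ∏ i ∈ s, f i ∈ I ^ #s := by
  rw [← prod_const]
  exact Ideal.prod_mem_prod h

lemma blockSum_sub_blockSum_mem {I J : Ideal A} {c x : A} (hc : c ∈ J) (hx : x ∈ J) {S S' : ℕ → A}
    {k : ℕ} (h : ∀ m < k, S m - S' m ∈ I) :
    blockSum c x S k - blockSum c x S' k ∈ J ^ k * I := by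
  rw [blockSum, blockSum, ← sum_sub_distrib]
  refine sum_mem fun ⟨i, j⟩ hij => ?_
  rw [HasAntidiagonal.mem_antidiagonal] at hij
  have hS : ∏ m ∈ range i, S m - ∏ m ∈ range i, S' m ∈ I :=
    prod_sub_prod_mem _ fun m hm => h m (by have := mem_range.1 hm; lia)
  have hu : ∏ m ∈ range i, (x + c * m) ∈ J ^ i := by
    simpa using prod_mem_pow (range i) fun m _ => J.add_mem hx (J.mul_mem_right (m : A) hc)
  have hv : ∏ l ∈ range j, (c * l - x) ∈ J ^ j := by
    simpa using prod_mem_pow (range j) fun l _ => J.sub_mem (J.mul_mem_right (l : A) hc) hx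
  have := Ideal.mul_mem_left _ (k.choose i : A) (Ideal.mul_mem_mul (Ideal.mul_mem_mul hu hv) hS)
  rw [← pow_add, hij] at this
  convert this using 1
  simp only [prod_mul_distrib]
  ring

variable (A) in
/-- The block `(T + pm + 1) ⋯ (T + pm + p - 1)`, normalised to have constant coefficient `1`; it is
`0` if `(pm + 1) ⋯ (pm + p - 1)` is not invertible in `A`. -/
noncomputable def normBlock (p m : ℕ) : A[X] :=
  C (Ring.inverse ((risingPoly A p).eval (p * m : A))) * taylor (p * m : A) (risingPoly A p)

lemma map_normBlock {B : Type*} [CommRing B] (f : A →+* B) {p m : ℕ}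
    (hm : IsUnit ((risingPoly A p).eval (p * m : A))) :
    (normBlock A p m).map f = normBlock B p m := by
  have hmap : (risingPoly A p).map f = risingPoly B p := by
    simp [risingPoly, Polynomial.map_prod]
  have heval : f ((risingPoly A p).eval (p * m : A)) = (risingPoly B p).eval (p * m : B) := by
    rw [← hmap, ← eval_map_apply]
    simp
  have hinv : f (Ring.inverse ((risingPoly A p).eval (p * m : A))) =
      Ring.inverse ((risingPoly B p).eval (p * m : B)) := by
    rw [← heval, ← (hm.map f).mul_right_inj, ← map_mul, Ring.mul_inverse_cancel _ hm,
      Ring.mul_inverse_cancel _ (hm.map f), map_one]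
  simp [normBlock, map_taylor, hmap, hinv]

end CommRing

section Field

variable {K : Type*} [Field K] [CharZero K] {p : ℕ}

lemma pow_mul_factorial_mul_multichoose (hp : p ≠ 0) (k : ℕ) :
    (p ^ k * k ! : K[X]) * Ring.multichoose (X : K[X]) (p * k) =
      ∏ m ∈ range k, (X + (p : K[X]) * (m : K[X])) * normBlock K p m := by
  have hw (m : ℕ) : (risingPoly K p).eval (p * m : K) ≠ 0 := by
    exact_mod_cast eval_natCast_risingPoly_ne_zero (A := K) p (p * m)
  have hw' : C (∏ m ∈ range k, (risingPoly K p).eval (p * m : K)) ≠ 0 :=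
    C_ne_zero.2 (prod_ne_zero_iff.2 fun m _ => hw m)
  have hfac := congrArg C (factorial_mul_eq (A := K) hp k)
  simp only [map_mul, map_pow, map_natCast] at hfac
  apply mul_left_cancel₀ hw'
  rw [← mul_assoc, mul_comm (C _), ← hfac, factorial_mul_multichoose, prod_range_mul_X_add hp,
    map_prod, ← prod_mul_distrib]
  refine prod_congr rfl fun m _ => ?_
  have hC : C ((risingPoly K p).eval (p * m : K)) *
      C (Ring.inverse ((risingPoly K p).eval (p * m : K))) = 1 := by
    rw [← C_mul, Ring.mul_inverse_cancel _ (hw m).isUnit, C_1]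
  unfold normBlock
  simp only [map_mul, map_natCast]
  linear_combination -(X + (p : K[X]) * m) * taylor (p * m : K) (risingPoly K p) * hC

lemma pow_mul_factorial_mul_multichoose_neg (hp : p ≠ 0) (k : ℕ) :
    (p ^ k * k ! : K[X]) * Ring.multichoose (-C (p : K)⁻¹ * X) k =
      ∏ l ∈ range k, ((p : K[X]) * (l : K[X]) - X) := by
  rw [mul_assoc, factorial_mul_multichoose, ← card_range k, ← prod_const, card_range,
    ← prod_mul_distrib]
  refine prod_congr rfl fun l _ => ?_
  linear_combination -X * natCast_mul_C_inv (K := K) hp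

lemma pow_mul_factorial_mul_coeff (hp : p ≠ 0) (k : ℕ) :
    (p ^ k * k ! : K[X]) * PowerSeries.coeff (p * k) (expPrimeToLogSeries K hp) =
      blockSum (p : K[X]) X (normBlock K p) k := by
  rw [expPrimeToLogSeries, coeff_mul_expand, blockSum, mul_sum]
  refine sum_congr rfl fun ⟨i, j⟩ hij => ?_
  rw [HasAntidiagonal.mem_antidiagonal] at hij
  subst hij
  rw [← pow_mul_factorial_mul_multichoose hp, ← pow_mul_factorial_mul_multichoose_neg hp,
    Nat.choose_symm_add, ← Nat.add_choose_mul_factorial_mul_factorial]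
  simp only [negBinomialSeries, PowerSeries.coeff_mk]
  push_cast
  ring

lemma pow_mul_factorial_mul_hsum (hp : p ≠ 0) (n k : ℕ) :
    (p ^ k * k ! * hsum p n (p * k) : K) =
      n ! * (blockSum (p : K[X]) X (normBlock K p) k).coeff n := by
  have hC : (p ^ k * k ! : K[X]) = C (p ^ k * k ! : K) := by simp
  rw [← pow_mul_factorial_mul_coeff hp, hC, coeff_C_mul, hsum_eq_factorial_mul_coeff hp]
  ring

end Field

end Blocks

section Newton

open Polynomial

variable {A : Type*} [CommRing A] {ι : Type*} [Fintype ι]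

lemma coeff_prod_X_add_C_eq_aeval_esymm (x : ι → A) {k : ℕ} (hk : k ≤ Fintype.card ι) :
    (∏ i, (X + C (x i))).coeff (Fintype.card ι - k) =
      MvPolynomial.aeval x (MvPolynomial.esymm ι A k) := by
  have h := congrArg (MvPolynomial.aeval x).toRingHom
    (MvPolynomial.prod_X_add_C_coeff A ι _ (Nat.sub_le (Fintype.card ι) k))
  rw [Nat.sub_sub_self hk, ← coeff_map, Polynomial.map_prod] at h
  simpa using h

lemma mul_coeff_prod_X_add_C (x : ι → A) {k : ℕ} (hk : k ≤ Fintype.card ι) :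
    k * (∏ i, (X + C (x i))).coeff (Fintype.card ι - k) =
      (-1) ^ (k + 1) * ∑ ij ∈ antidiagonal k with ij.1 < k,
        (-1) ^ ij.1 * (∏ i, (X + C (x i))).coeff (Fintype.card ι - ij.1) * ∑ i, x i ^ ij.2 := by
  have h := congrArg (MvPolynomial.aeval x) (MvPolynomial.mul_esymm_eq_sum ι A k)
  simp only [map_mul, map_sum, map_pow, map_neg, map_one, map_natCast, MvPolynomial.psum,
    MvPolynomial.aeval_X] at h
  rw [coeff_prod_X_add_C_eq_aeval_esymm x hk, h]
  congr 1
  refine sum_congr rfl fun ij hij => ?_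
  rw [coeff_prod_X_add_C_eq_aeval_esymm x ((mem_filter.1 hij).2.le.trans hk)]

lemma dvd_coeff_prod_X_add_C {a : A} (x : ι → A) {k : ℕ} (hk : k ≤ Fintype.card ι)
    (hunit : IsUnit (k : A)) (ha : ∀ j ∈ Icc 1 k, a ∣ ∑ i, x i ^ j) :
    a ∣ (∏ i, (X + C (x i))).coeff (Fintype.card ι - k) := by
  rw [← hunit.dvd_mul_left, mul_coeff_prod_X_add_C x hk]
  refine Dvd.dvd.mul_left (dvd_sum fun ⟨i, j⟩ hij => Dvd.dvd.mul_left (ha j ?_) _) _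
  rw [mem_filter, HasAntidiagonal.mem_antidiagonal] at hij
  rw [mem_Icc]
  lia

lemma sq_dvd_mul_coeff_prod_X_add_C_add {a : A} (x : ι → A) {k : ℕ} (hk : k ≤ Fintype.card ι)
    (hk0 : k ≠ 0) (hunit : ∀ j ∈ Icc 1 k, IsUnit (j : A)) (ha : ∀ j ∈ Icc 1 k, a ∣ ∑ i, x i ^ j) :
    a ^ 2 ∣ k * (∏ i, (X + C (x i))).coeff (Fintype.card ι - k) + (-1) ^ k * ∑ i, x i ^ k := by
  have hmem : ((0, k) : ℕ × ℕ) ∈ {ij ∈ antidiagonal k | ij.1 < k} := by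
    simpa using Nat.pos_of_ne_zero hk0
  have hlead : (∏ i, (X + C (x i))).coeff (Fintype.card ι) = 1 := by
    simpa using coeff_prod_X_add_C_eq_aeval_esymm x (Nat.zero_le _)
  rw [mul_coeff_prod_X_add_C x hk, ← add_sum_erase _ _ hmem, Nat.sub_zero, hlead]
  have hrest : a ^ 2 ∣ ∑ ij ∈ {ij ∈ antidiagonal k | ij.1 < k}.erase (0, k),
      (-1) ^ ij.1 * (∏ i, (X + C (x i))).coeff (Fintype.card ι - ij.1) * ∑ i, x i ^ ij.2 := by
    refine dvd_sum fun ⟨i, j⟩ hij => ?_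
    rw [mem_erase, mem_filter, HasAntidiagonal.mem_antidiagonal, Ne, Prod.mk.injEq] at hij
    have hi : i ∈ Icc 1 k := by rw [mem_Icc]; lia
    rw [sq]
    refine mul_dvd_mul (Dvd.dvd.mul_left (dvd_coeff_prod_X_add_C x ?_ (hunit i hi)
      fun j' hj' => ha j' ?_) _) (ha j ?_)
    all_goals simp only [mem_Icc] at *
    all_goals lia
  convert hrest.mul_left ((-1) ^ (k + 1)) using 1
  ring

end Newton

section PadicBernoulli

variable {p : ℕ} [Fact p.Prime]

lemma isUnit_natCast_padicInt {k : ℕ} (hk : ¬ p ∣ k) : IsUnit (k : ℤ_[p]) := by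
  rw [PadicInt.isUnit_iff, PadicInt.norm_natCast_eq_one_iff]
  exact (Nat.Prime.coprime_iff_not_dvd Fact.out).2 hk

lemma natCast_dvd_padicInt_iff {x : ℤ_[p]} : (p : ℤ_[p]) ∣ x ↔ PadicInt.toZMod x = 0 := by
  rw [← Ideal.mem_span_singleton, ← PadicInt.maximalIdeal_eq_span_p, ← PadicInt.ker_toZMod,
    RingHom.mem_ker]

lemma norm_natCast_padic_eq_one {k : ℕ} (hk0 : k ≠ 0) (hk : k < p) : ‖(k : ℚ_[p])‖ = 1 := by
  rw [Padic.norm_natCast_eq_one_iff, Nat.Prime.coprime_iff_not_dvd Fact.out]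
  exact Nat.not_dvd_of_pos_of_lt (Nat.pos_of_ne_zero hk0) hk

lemma norm_bernoulli_le_one {k : ℕ} (hk : k + 1 < p) : ‖((bernoulli k : ℚ) : ℚ_[p])‖ ≤ 1 := by
  rcases k.even_or_odd' with ⟨m, rfl | rfl⟩
  · obtain ⟨z, hz⟩ := Bernoulli.vonStaudt_clausen m
    rw [eq_sub_of_add_eq hz.symm]
    push_cast
    refine (PadicInt.subring p).sub_mem (Padic.norm_int_le_one z) (sum_mem fun q hq => ?_)
    rw [mem_filter, mem_range] at hq
    have hq1 := norm_natCast_padic_eq_one (p := p) hq.2.1.ne_zero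
      ((Nat.lt_succ_iff.1 hq.1).trans_lt hk)
    rw [PadicInt.mem_subring_iff, norm_div, norm_one, hq1, one_div_one]
  · rcases Nat.eq_zero_or_pos m with rfl | hm
    · have h2 := norm_natCast_padic_eq_one (p := p) two_ne_zero hk
      push_cast at h2
      norm_num [bernoulli_one, norm_div, h2]
    · rw [bernoulli_eq_zero_of_odd ⟨m, rfl⟩ (by lia)]
      simp

variable (p) in
/-- The Bernoulli number `B_k` as a `p`-adic integer, with the junk value `0` if `B_k` is not
`p`-integral. -/
noncomputable def padicBernoulli (k : ℕ) : ℤ_[p] :=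
  if h : ‖((bernoulli k : ℚ) : ℚ_[p])‖ ≤ 1 then ⟨_, h⟩ else 0

lemma coe_padicBernoulli {k : ℕ} (hk : k + 1 < p) :
    (padicBernoulli p k : ℚ_[p]) = (bernoulli k : ℚ) := by
  exact congrArg ((↑) : ℤ_[p] → ℚ_[p]) (dif_pos (norm_bernoulli_le_one hk))

lemma padicBernoulli_eq_zero {k : ℕ} (hk : Odd k) (hk1 : 1 < k) : padicBernoulli p k = 0 := by
  simp [padicBernoulli, bernoulli_eq_zero_of_odd hk hk1]

lemma sq_dvd_sum_pow_sub {k : ℕ} (hk : k + 1 < p) :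
    (p : ℤ_[p]) ^ 2 ∣ ∑ i ∈ range p, (i : ℤ_[p]) ^ k - p * padicBernoulli p k := by
  have hfaulhaber : ((k + 1 : ℕ) : ℤ_[p]) *
      (∑ i ∈ range p, (i : ℤ_[p]) ^ k - p * padicBernoulli p k) =
      ∑ i ∈ range k, padicBernoulli p i * (k + 1).choose i * p ^ (k + 1 - i) := by
    apply PadicInt.ext
    have hk0 : (k + 1 : ℚ_[p]) ≠ 0 := by exact_mod_cast k.succ_ne_zero
    have h := congrArg (Rat.cast : ℚ → ℚ_[p]) (sum_range_pow p k)
    rw [sum_range_succ, ← sum_div] at h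
    push_cast [Nat.choose_succ_self_right] at h
    simp only [PadicInt.coe_mul, PadicInt.coe_sub, PadicInt.coe_sum, PadicInt.coe_pow,
      PadicInt.coe_natCast]
    push_cast
    have hsum : ∑ i ∈ range k, (padicBernoulli p i : ℚ_[p]) * (k + 1).choose i * p ^ (k + 1 - i) =
        ∑ i ∈ range k, ((bernoulli i : ℚ) : ℚ_[p]) * (k + 1).choose i * p ^ (k + 1 - i) :=
      sum_congr rfl fun i hi => by
        rw [coe_padicBernoulli (by have := mem_range.1 hi; lia)]
    rw [hsum, h, coe_padicBernoulli hk, Nat.add_sub_cancel_left]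
    field_simp
    ring
  have hk' : IsUnit ((k + 1 : ℕ) : ℤ_[p]) :=
    isUnit_natCast_padicInt (Nat.not_dvd_of_pos_of_lt k.succ_pos hk)
  rw [← hk'.dvd_mul_left, hfaulhaber]
  refine dvd_sum fun i hi => Dvd.dvd.mul_left (pow_dvd_pow _ ?_) _
  have := mem_range.1 hi
  lia

lemma dvd_sum_pow {k : ℕ} (hk : k + 1 < p) : (p : ℤ_[p]) ∣ ∑ i ∈ range p, (i : ℤ_[p]) ^ k := by
  simpa using ((dvd_pow_self _ two_ne_zero).trans (sq_dvd_sum_pow_sub hk)).add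
    (dvd_mul_right (p : ℤ_[p]) (padicBernoulli p k))

end PadicBernoulli

section Rising

open Polynomial

variable {p : ℕ} [Fact p.Prime]

lemma risingPoly_eq_prod_fin (A : Type*) [CommRing A] (p : ℕ) :
    risingPoly A p = ∏ i : Fin (p - 1), (X + C ((i + 1 : ℕ) : A)) := by
  rw [risingPoly, prod_range]
  simp

lemma sum_fin_pow_eq (A : Type*) [CommRing A] {p k : ℕ} (hp : p ≠ 0) (hk : k ≠ 0) :
    ∑ i : Fin (p - 1), ((i + 1 : ℕ) : A) ^ k = ∑ i ∈ range p, (i : A) ^ k := by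
  obtain ⟨q, hq⟩ := Nat.exists_eq_succ_of_ne_zero hp
  rw [← sum_range (fun i => ((i + 1 : ℕ) : A) ^ k), hq, sum_range_succ']
  simp [hk]

lemma dvd_coeff_risingPoly {k : ℕ} (hk0 : k ≠ 0) (hk : k + 1 < p) :
    (p : ℤ_[p]) ∣ (risingPoly ℤ_[p] p).coeff (p - 1 - k) := by
  have h := dvd_coeff_prod_X_add_C (a := (p : ℤ_[p])) (k := k)
    (fun i : Fin (p - 1) => ((i + 1 : ℕ) : ℤ_[p])) (by rw [Fintype.card_fin]; lia)
    (isUnit_natCast_padicInt (Nat.not_dvd_of_pos_of_lt (Nat.pos_of_ne_zero hk0) (by lia)))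
    fun j hj => ?_
  · rwa [Fintype.card_fin, ← risingPoly_eq_prod_fin] at h
  · rw [mem_Icc] at hj
    rw [sum_fin_pow_eq _ (NeZero.ne p) (by lia)]
    exact dvd_sum_pow (by lia)

lemma sq_dvd_mul_coeff_risingPoly_add {k : ℕ} (hk0 : k ≠ 0) (hk : k + 1 < p) :
    (p : ℤ_[p]) ^ 2 ∣
      k * (risingPoly ℤ_[p] p).coeff (p - 1 - k) + (-1) ^ k * (p * padicBernoulli p k) := by
  have h := sq_dvd_mul_coeff_prod_X_add_C_add (a := (p : ℤ_[p])) (k := k)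
    (fun i : Fin (p - 1) => ((i + 1 : ℕ) : ℤ_[p])) (by rw [Fintype.card_fin]; lia) hk0
    (fun j hj => ?_) fun j hj => ?_
  · rw [Fintype.card_fin, ← risingPoly_eq_prod_fin, sum_fin_pow_eq _ (NeZero.ne p) hk0] at h
    convert h.sub ((sq_dvd_sum_pow_sub hk).mul_left ((-1) ^ k)) using 1
    ring
  · rw [mem_Icc] at hj
    exact isUnit_natCast_padicInt (Nat.not_dvd_of_pos_of_lt hj.1 (by lia))
  · rw [mem_Icc] at hj
    rw [sum_fin_pow_eq _ (NeZero.ne p) (by lia)]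
    exact dvd_sum_pow (by lia)

end Rising

section Expansion

open Polynomial

variable {A : Type*} [CommRing A]

lemma pow_three_dvd_taylor_sub (r : A) (f : A[X]) :
    C r ^ 3 ∣ taylor r f - (f + C r * derivative f + C r ^ 2 * hasseDeriv 2 f) := by
  induction f using Polynomial.induction_on with
  | C a => simp [hasseDeriv_C]
  | add f g hf hg =>
    convert hf.add hg using 1
    simp only [map_add]
    ring
  | monomial n a ih =>
    rw [pow_succ X, ← mul_assoc]
    generalize C a * X ^ n = f at ih
    have hhasse : hasseDeriv 2 (f * X) = hasseDeriv 2 f * X + derivative f := by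
      simp [hasseDeriv_mul, Nat.antidiagonal_succ, hasseDeriv_X, add_comm]
    obtain ⟨t, ht⟩ := ih
    refine ⟨t * (X + C r) + hasseDeriv 2 f, ?_⟩
    rw [taylor_mul, taylor_X, hhasse, derivative_mul, derivative_X]
    linear_combination (X + C r) * ht

lemma taylor_mem_span_pow {a r : A} (hr : a ∣ r) {k : ℕ} {f : A[X]}
    (hf : f ∈ Ideal.span {C a, X} ^ k) : taylor r f ∈ Ideal.span {C a, X} ^ k := by
  have hle : (Ideal.span {C a, X}).map (taylorAlgHom r) ≤ Ideal.span {C a, X} := by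
    rw [Ideal.map_span, Ideal.span_le]
    rintro _ ⟨g, rfl | rfl, rfl⟩
    · simpa using Ideal.subset_span (by simp)
    · have hC : C r ∈ Ideal.span {C a, X} :=
        Ideal.mem_of_dvd _ (map_dvd C hr) (Ideal.subset_span (by simp))
      simpa using Ideal.add_mem _ (Ideal.subset_span (by simp)) hC
  exact (Ideal.pow_right_mono hle k) (Ideal.map_pow (taylorAlgHom r) _ k ▸
    Ideal.mem_map_of_mem (taylorAlgHom r) hf)

lemma pow_sub_dvd_coeff {a : A} {k : ℕ} {f : A[X]} (hf : f ∈ Ideal.span {C a, X} ^ k) (n : ℕ) :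
    a ^ (k - n) ∣ f.coeff n := by
  induction k generalizing f n with
  | zero => simp
  | succ k ih =>
    rw [pow_succ'] at hf
    induction hf using Submodule.mul_induction_on' with
    | mem_mul_mem g hg h hh =>
      obtain ⟨s, t, rfl⟩ := Ideal.mem_span_pair.1 hg
      have hs := ih (Ideal.mul_mem_left _ s hh) n
      rw [show (s * C a + t * X) * h = C a * (s * h) + X * (t * h) by ring, coeff_add, coeff_C_mul]
      have hmul : a ^ (k - n + 1) ∣ a * (s * h).coeff n := pow_succ' a _ ▸ mul_dvd_mul_left a hs
      refine dvd_add ((pow_dvd_pow a (by lia)).trans hmul) ?_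
      cases n with
      | zero => simp
      | succ n => simpa using ih (Ideal.mul_mem_left _ t hh) n
    | add g _ h _ hg hh => exact coeff_add g h n ▸ dvd_add hg hh

lemma mem_span_pow_iff {a : A} {k : ℕ} {f : A[X]} :
    f ∈ Ideal.span {C a, X} ^ k ↔ ∀ n, a ^ (k - n) ∣ f.coeff n := by
  refine ⟨pow_sub_dvd_coeff, fun h => ?_⟩
  rw [f.as_sum_support_C_mul_X_pow]
  refine sum_mem fun n _ => ?_
  obtain ⟨t, ht⟩ := h n
  have hC : C a ^ (k - n) ∈ Ideal.span {C a, X} ^ (k - n) :=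
    Ideal.pow_mem_pow (Ideal.subset_span (by simp)) _
  have hX : (X : A[X]) ^ n ∈ Ideal.span {C a, X} ^ n :=
    Ideal.pow_mem_pow (Ideal.subset_span (by simp)) _
  have hmem := Ideal.mul_mem_left _ (C t) (Ideal.mul_mem_mul hC hX)
  rw [← pow_add] at hmem
  convert Ideal.pow_le_pow_right (show k ≤ k - n + n by lia) hmem using 1
  rw [ht, C_mul, C_pow]
  ring

lemma pow_dvd_eval {a r : A} (hr : a ∣ r) {k : ℕ} {f : A[X]} (hf : f ∈ Ideal.span {C a, X} ^ k) :
    a ^ k ∣ f.eval r := by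
  simpa using pow_sub_dvd_coeff (taylor_mem_span_pow hr hf) 0

/-- The expansion modulo `a ^ 4` of the `m`-th normalised block of an arithmetic progression with
common difference `a`, when the block for `m = 0` is `1 + a * q`; the constant `z` comes from the
normalisation. -/
noncomputable def blockExpansion (a : A) (q : A[X]) (m : ℕ) (z : A) : A[X] :=
  1 + C a * q + C a ^ 2 * (m * derivative q) + C a ^ 3 * (m ^ 2 * hasseDeriv 2 q + C z)

lemma pow_three_dvd_eval_sub_one {a r : A} (hr : a ∣ r) {k : ℕ} (hk : 3 ≤ k) {f q : A[X]}
    (hf : f - (1 + C a * q) ∈ Ideal.span {C a, X} ^ k) (hq : q ∈ Ideal.span {C a, X} ^ 2) :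
    a ^ 3 ∣ f.eval r - 1 := by
  have ha : C a ∈ Ideal.span {C a, X} := Ideal.subset_span (Set.mem_insert _ _)
  have haq : C a * q ∈ Ideal.span {C a, X} ^ 3 := pow_succ' (Ideal.span {C a, X}) 2 ▸
    Ideal.mul_mem_mul ha hq
  have hf1 : f - 1 ∈ Ideal.span {C a, X} ^ 3 := by
    convert Ideal.add_mem _ (Ideal.pow_le_pow_right hk hf) haq using 1
    ring
  simpa using pow_dvd_eval hr hf1

lemma exists_taylor_sub_blockExpansion_mem {a ν : A} {k m : ℕ} (hk : 3 ≤ k) {f q : A[X]}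
    (hf : f - (1 + C a * q) ∈ Ideal.span {C a, X} ^ k) (hq : q ∈ Ideal.span {C a, X} ^ 2)
    (hν : ν * f.eval (a * m) = 1) :
    ∃ z, C ν * taylor (a * m) f - blockExpansion a q m z ∈
      Ideal.span {C a ^ 4} ⊔ Ideal.span {C a, X} ^ k := by
  have hr : a ∣ a * m := dvd_mul_right a m
  obtain ⟨w, hw⟩ := pow_three_dvd_eval_sub_one hr hk hf hq
  obtain ⟨t, ht⟩ := pow_three_dvd_taylor_sub (a * m) q
  have hνw : C ν = 1 + C a ^ 3 * C (-w * ν) := by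
    rw [← C_1, ← C_pow, ← C_mul, ← C_add]
    congr 1
    linear_combination hν - ν * hw
  have herr := taylor_mem_span_pow hr hf
  refine ⟨-w * ν, Submodule.mem_sup.2 ⟨_, Ideal.mul_mem_right
    (m ^ 3 * t + C (-w * ν) * taylor (a * m) q) _ (Ideal.mem_span_singleton_self _), _,
    Ideal.mul_mem_left _ (1 + C a ^ 3 * C (-w * ν)) herr, ?_⟩⟩
  rw [hνw, blockExpansion]
  simp only [map_mul, map_natCast, map_sub, map_add, C_1, taylor_one, taylor_mul, taylor_C] at ht ⊢
  linear_combination -C a * ht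

lemma blockSum_three_of_pow_four_eq_zero {P : A} (hP : P ^ 4 = 0) (x q d h : A) (z : ℕ → A) :
    blockSum P x (fun m => 1 + P * q + P ^ 2 * (m * d) + P ^ 3 * (m ^ 2 * h + z m)) 3 =
      P ^ 3 * (x ^ 3 * (2 * h + 3 * q * d + q ^ 3 + (z 0 - 2 * z 1 + z 2)) +
        6 * x ^ 2 * (d + q ^ 2) + 6 * x * q) := by
  rw [blockSum, Nat.sum_antidiagonal_eq_sum_range_succ_mk]
  simp only [sum_range_succ, prod_range_succ, range_zero, prod_empty, sum_empty]
  norm_num [Nat.choose]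
  grind

/-- The leading term of `blockSum` for three blocks: its quotient by `a ^ 3`, modulo `a`. -/
noncomputable def blockSumLead (q : A[X]) (w : A) : A[X] :=
  X ^ 3 * (derivative (derivative q) + 3 * q * derivative q + q ^ 3 + C w) +
    6 * X ^ 2 * (derivative q + q ^ 2) + 6 * X * q

lemma map_blockSumLead {B : Type*} [CommRing B] (f : A →+* B) (q : A[X]) (w : A) :
    (blockSumLead q w).map f = blockSumLead (q.map f) (f w) := by
  simp [blockSumLead, derivative_map]

lemma pow_four_dvd_blockSum_blockExpansion_sub (a : A) (q : A[X]) (z : ℕ → A) :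
    C a ^ 4 ∣ blockSum (C a) X (fun m => blockExpansion a q m (z m)) 3 -
      C a ^ 3 * blockSumLead q (z 0 - 2 * z 1 + z 2) := by
  rw [← Ideal.mem_span_singleton, ← Ideal.Quotient.eq, map_blockSum]
  have hP : Ideal.Quotient.mk (Ideal.span {C a ^ 4}) (C a) ^ 4 = 0 :=
    (map_pow _ _ 4).symm.trans
      (Ideal.Quotient.eq_zero_iff_mem.2 (Ideal.mem_span_singleton_self _))
  have hhasse : 2 * hasseDeriv 2 q = derivative (derivative q) := by
    simpa using congrFun (factorial_smul_hasseDeriv (R := A) (k := 2)) q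
  rw [blockSumLead, ← hhasse]
  simp only [blockExpansion, map_add, map_sub, map_mul, map_pow, map_one, map_natCast, map_ofNat]
  exact blockSum_three_of_pow_four_eq_zero hP _ _ _ _ _

lemma pow_four_dvd_coeff_blockSum_sub {a : A} {q : A[X]} {k n : ℕ} (hn : n < k) {S : ℕ → A[X]}
    {z : ℕ → A} (hS : ∀ m < 3, S m - blockExpansion a q m (z m) ∈
      Ideal.span {C a ^ 4} ⊔ Ideal.span {C a, X} ^ k) :
    a ^ 4 ∣ (blockSum (C a) X S 3).coeff n -
      a ^ 3 * (blockSumLead q (z 0 - 2 * z 1 + z 2)).coeff n := by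
  have hdiff := blockSum_sub_blockSum_mem (J := Ideal.span {C a, X}) (c := C a) (x := X)
    (S := S) (S' := fun m => blockExpansion a q m (z m))
    (Ideal.subset_span (by simp)) (Ideal.subset_span (by simp)) hS
  rw [Ideal.mul_sup, ← pow_add] at hdiff
  obtain ⟨u, hu, v, hv, huv⟩ := Submodule.mem_sup.1 hdiff
  obtain ⟨s, rfl⟩ := Ideal.mem_span_singleton.1 (Ideal.mul_le_right hu)
  obtain ⟨t, ht⟩ := pow_four_dvd_blockSum_blockExpansion_sub a q z
  have hv' : a ^ 4 ∣ v.coeff n := (pow_dvd_pow a (by lia)).trans (pow_sub_dvd_coeff hv n)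
  have hsum : blockSum (C a) X S 3 - C (a ^ 3) * blockSumLead q (z 0 - 2 * z 1 + z 2) =
      C (a ^ 4) * (s + t) + v := by
    rw [C_pow, C_pow]
    linear_combination ht - huv
  rw [← coeff_C_mul, ← coeff_sub, hsum, coeff_add, coeff_C_mul]
  exact dvd_add (dvd_mul_right _ _) hv'

lemma coeff_comp_neg_X (f : A[X]) (n : ℕ) : (f.comp (-X)).coeff n = (-1) ^ n * f.coeff n := by
  have : (-X : A[X]) = C (-1) * X := by simp
  rw [this, comp_C_mul_X_coeff, mul_comm]

lemma comp_neg_X_eq_self {f : A[X]} (hf : ∀ n, Odd n → f.coeff n = 0) : f.comp (-X) = f := by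
  ext n
  rw [coeff_comp_neg_X]
  rcases n.even_or_odd with hn | hn
  · rw [hn.neg_one_pow, one_mul]
  · rw [hf n hn, mul_zero]

lemma two_mul_coeff_blockSumLead {q : A[X]} (hq : q.comp (-X) = q) (w : A) {n : ℕ} (hn : Even n) :
    2 * (blockSumLead q w).coeff (n + 2) = (3 * n + 12) * (q ^ 2).coeff n := by
  have hderiv : (derivative q).comp (-X) = -derivative q := by
    have h := congrArg derivative hq
    rw [derivative_comp, derivative_neg, derivative_X] at h
    linear_combination -h
  have hderiv2 : (derivative (derivative q)).comp (-X) = derivative (derivative q) := by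
    have h := congrArg derivative hderiv
    rw [derivative_comp, derivative_neg, derivative_X, derivative_neg] at h
    linear_combination -h
  have heven : blockSumLead q w + (blockSumLead q w).comp (-X) =
      C 3 * (X * derivative (q ^ 2) * X ^ 2) + C 12 * (q ^ 2 * X ^ 2) := by
    simp only [blockSumLead, add_comp, mul_comp, pow_comp, X_comp, hderiv, hderiv2, hq, C_comp,
      ofNat_comp, sq q, derivative_mul, map_ofNat]
    ring
  have h := congrArg (coeff · (n + 2)) heven
  simp only [coeff_add, coeff_comp_neg_X, coeff_C_mul, coeff_mul_X_pow] at h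
  have hXd : (X * derivative (q ^ 2)).coeff n = n * (q ^ 2).coeff n := by
    cases n with
    | zero => simp
    | succ n => rw [coeff_X_mul, coeff_derivative]; push_cast; ring
  rw [(hn.add even_two).neg_one_pow, hXd] at h
  linear_combination h

end Expansion

section PadicBlocks

open Polynomial

lemma exists_mul_coeff_eq {A : Type*} [CommRing A] {a : A} {f : A[X]} {s : Finset ℕ}
    (h : ∀ r ∈ s, a ∣ f.coeff r) :
    ∃ q : A[X], (∀ r ∈ s, a * q.coeff r = f.coeff r) ∧ ∀ r ∉ s, q.coeff r = 0 := by
  choose! c hc using h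
  refine ⟨∑ r ∈ s, monomial r (c r), fun r hr => ?_, fun r hr => ?_⟩
  · simp [coeff_monomial, hr, hc r hr]
  · simp [coeff_monomial, hr]

variable {p : ℕ} [Fact p.Prime]

lemma isUnit_eval_risingPoly (m : ℕ) : IsUnit ((risingPoly ℤ_[p] p).eval (p * m : ℤ_[p])) := by
  rw [risingPoly, eval_prod, IsUnit.prod_iff]
  intro i hi
  have hdvd : ¬ p ∣ p * m + (i + 1) := by
    rw [← Nat.dvd_add_iff_right (dvd_mul_right p m)]
    exact Nat.not_dvd_of_pos_of_lt i.succ_pos (by have := mem_range.1 hi; lia)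
  simpa using isUnit_natCast_padicInt hdvd

lemma toZMod_eval_zero_risingPoly :
    PadicInt.toZMod ((risingPoly ℤ_[p] p).eval 0) = -1 := by
  rw [← ZMod.wilsons_lemma, ← prod_range_add_one_eq_factorial, risingPoly, eval_prod, map_prod,
    Nat.cast_prod]
  refine prod_congr rfl fun i _ => ?_
  simp

lemma eval_zero_mul_normBlock_zero :
    C ((risingPoly ℤ_[p] p).eval 0) * normBlock ℤ_[p] p 0 = risingPoly ℤ_[p] p := by
  have h := isUnit_eval_risingPoly (p := p) 0
  simp only [Nat.cast_zero, mul_zero] at h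
  simp only [normBlock, Nat.cast_zero, mul_zero, taylor_zero]
  rw [← mul_assoc, ← C_mul, Ring.mul_inverse_cancel _ h, C_1, one_mul]

lemma coeff_normBlock_zero_zero : (normBlock ℤ_[p] p 0).coeff 0 = 1 := by
  have h := isUnit_eval_risingPoly (p := p) 0
  simp only [Nat.cast_zero, mul_zero] at h
  simpa [normBlock, coeff_zero_eq_eval_zero] using Ring.inverse_mul_cancel _ h

lemma dvd_coeff_normBlock_zero {r : ℕ} (hr : r ∈ Icc 1 (p - 2)) :
    (p : ℤ_[p]) ∣ (normBlock ℤ_[p] p 0).coeff r := by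
  rw [mem_Icc] at hr
  have h := dvd_coeff_risingPoly (p := p) (k := p - 1 - r) (by lia) (by lia)
  rw [show p - 1 - (p - 1 - r) = r by lia] at h
  simpa [normBlock] using h.mul_left _

lemma exists_mul_coeff_eq_coeff_normBlock (p : ℕ) [Fact p.Prime] :
    ∃ q : ℤ_[p][X], (∀ r ∈ Icc 1 (p - 3), p * q.coeff r = (normBlock ℤ_[p] p 0).coeff r) ∧
      ∀ r ∉ Icc 1 (p - 3), q.coeff r = 0 :=
  exists_mul_coeff_eq fun r hr => dvd_coeff_normBlock_zero
    (Icc_subset_Icc_right (by lia) hr)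

variable (p) in
/-- The quotient by `p` of the terms of degrees `1` to `p - 3` of the normalised block
`(T + 1) ⋯ (T + p - 1) / (p - 1)!`. -/
noncomputable def normBlockQuot : ℤ_[p][X] :=
  (exists_mul_coeff_eq_coeff_normBlock p).choose

lemma mul_coeff_normBlockQuot {r : ℕ} (hr : r ∈ Icc 1 (p - 3)) :
    p * (normBlockQuot p).coeff r = (normBlock ℤ_[p] p 0).coeff r :=
  (exists_mul_coeff_eq_coeff_normBlock p).choose_spec.1 r hr

lemma coeff_normBlockQuot_eq_zero {r : ℕ} (hr : r ∉ Icc 1 (p - 3)) :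
    (normBlockQuot p).coeff r = 0 :=
  (exists_mul_coeff_eq_coeff_normBlock p).choose_spec.2 r hr

lemma normBlock_zero_sub_mem :
    normBlock ℤ_[p] p 0 - (1 + C (p : ℤ_[p]) * normBlockQuot p) ∈
      Ideal.span {C (p : ℤ_[p]), X} ^ (p - 1) := by
  rw [mem_span_pow_iff]
  intro n
  rw [coeff_sub, coeff_add, coeff_C_mul]
  rcases Nat.eq_zero_or_pos n with rfl | hn
  · rw [coeff_normBlock_zero_zero, coeff_normBlockQuot_eq_zero (by simp)]
    simp
  rw [coeff_one, if_neg hn.ne', zero_add]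
  rcases le_or_gt n (p - 3) with hn3 | hn3
  · rw [mul_coeff_normBlockQuot (mem_Icc.2 ⟨hn, hn3⟩), sub_self]
    exact dvd_zero _
  rw [coeff_normBlockQuot_eq_zero (by simp [hn3]), mul_zero, sub_zero]
  rcases le_or_gt n (p - 2) with hn2 | hn2
  · rw [show p - 1 - n = 1 by lia, pow_one]
    exact dvd_coeff_normBlock_zero (mem_Icc.2 ⟨hn, hn2⟩)
  · rw [show p - 1 - n = 0 by lia, pow_zero]
    exact one_dvd _

variable (p) in
/-- The reduction modulo `p` of `normBlockQuot p`; up to sign, its coefficient of degree `a - 1` is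
the residue of `B_{p-a} / a` for odd `a`. -/
noncomputable def normBlockQuotMod : (ZMod p)[X] :=
  (normBlockQuot p).map PadicInt.toZMod

lemma succ_mul_coeff_normBlockQuotMod {r : ℕ} (hr : r ∈ Icc 1 (p - 3)) :
    ((r + 1 : ℕ) : ZMod p) * (normBlockQuotMod p).coeff r =
      -(-1) ^ (p - 1 - r) * PadicInt.toZMod (padicBernoulli p (p - 1 - r)) := by
  have hr' := mem_Icc.1 hr
  have h := sq_dvd_mul_coeff_risingPoly_add (p := p) (k := p - 1 - r) (by lia) (by lia)
  rw [show p - 1 - (p - 1 - r) = r by lia, ← eval_zero_mul_normBlock_zero, coeff_C_mul,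
    ← mul_coeff_normBlockQuot hr] at h
  obtain ⟨t, ht⟩ := h
  have hdiv : ((p - 1 - r : ℕ) : ℤ_[p]) * (risingPoly ℤ_[p] p).eval 0 * (normBlockQuot p).coeff r +
      (-1) ^ (p - 1 - r) * padicBernoulli p (p - 1 - r) = p * t := by
    apply mul_left_cancel₀ (NeZero.ne (p : ℤ_[p]))
    linear_combination ht
  have hmod := congrArg PadicInt.toZMod hdiv
  have hcast : ((p - 1 - r : ℕ) : ZMod p) = -((r + 1 : ℕ) : ZMod p) := by
    rw [eq_neg_iff_add_eq_zero, ← Nat.cast_add, show p - 1 - r + (r + 1) = p by lia,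
      ZMod.natCast_self]
  simp only [map_add, map_mul, map_pow, map_neg, map_one, map_natCast, ZMod.natCast_self, zero_mul,
    toZMod_eval_zero_risingPoly, hcast] at hmod
  rw [normBlockQuotMod, coeff_map]
  linear_combination hmod

lemma coeff_normBlockQuotMod_eq_zero {r : ℕ} (hr : Odd r) : (normBlockQuotMod p).coeff r = 0 := by
  by_cases hmem : r ∈ Icc 1 (p - 3)
  · have h := succ_mul_coeff_normBlockQuotMod hmem
    rw [mem_Icc] at hmem
    have hodd : Odd (p - 1 - r) := by
      have := (Fact.out : p.Prime).odd_of_ne_two (by lia)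
      grind
    rw [padicBernoulli_eq_zero hodd (by lia), map_zero, mul_zero] at h
    refine (mul_eq_zero.1 h).resolve_left ?_
    rw [ZMod.natCast_eq_zero_iff]
    exact Nat.not_dvd_of_pos_of_lt r.succ_pos (by lia)
  · rw [normBlockQuotMod, coeff_map, coeff_normBlockQuot_eq_zero hmem, map_zero]

lemma mul_coeff_normBlockQuotMod {a : ℕ} (ha : Odd a) (ha3 : 3 ≤ a) (hap : a + 2 ≤ p) :
    (a : ZMod p) * (normBlockQuotMod p).coeff (a - 1) =
      -PadicInt.toZMod (padicBernoulli p (p - a)) := by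
  have h := succ_mul_coeff_normBlockQuotMod (p := p) (r := a - 1) (by rw [mem_Icc]; lia)
  have heven : Even (p - a) := by
    have := (Fact.out : p.Prime).odd_of_ne_two (by lia)
    grind
  rw [show p - 1 - (a - 1) = p - a by lia, heven.neg_one_pow, show a - 1 + 1 = a by lia] at h
  linear_combination h

lemma normBlockQuot_mem : normBlockQuot p ∈ Ideal.span {C (p : ℤ_[p]), X} ^ 2 := by
  rw [mem_span_pow_iff]
  intro n
  match n with
  | 0 => simp [coeff_normBlockQuot_eq_zero]
  | 1 =>
    rw [pow_one, natCast_dvd_padicInt_iff, ← coeff_map]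
    exact coeff_normBlockQuotMod_eq_zero odd_one
  | n + 2 => simp

end PadicBlocks

section Reduction

open Polynomial

variable {p : ℕ} [Fact p.Prime]

lemma exists_normBlock_sub_blockExpansion_mem (hp : 3 < p) (m : ℕ) :
    ∃ z, normBlock ℤ_[p] p m - blockExpansion (p : ℤ_[p]) (normBlockQuot p) m z ∈
      Ideal.span {C (p : ℤ_[p]) ^ 4} ⊔ Ideal.span {C (p : ℤ_[p]), X} ^ (p - 1) := by
  set ν := Ring.inverse ((risingPoly ℤ_[p] p).eval (p * m : ℤ_[p]))
  have hν : ν * (risingPoly ℤ_[p] p).eval (p * m : ℤ_[p]) = 1 :=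
    Ring.inverse_mul_cancel _ (isUnit_eval_risingPoly m)
  have hblock : normBlock ℤ_[p] p m = C (ν * (risingPoly ℤ_[p] p).eval 0) *
      taylor (p * m : ℤ_[p]) (normBlock ℤ_[p] p 0) := by
    rw [C_mul, mul_assoc, ← taylor_C (p * m : ℤ_[p]) ((risingPoly ℤ_[p] p).eval 0), ← taylor_mul,
      eval_zero_mul_normBlock_zero, normBlock]
  rw [hblock]
  refine exists_taylor_sub_blockExpansion_mem (by lia) normBlock_zero_sub_mem normBlockQuot_mem ?_
  rw [← eval_zero_mul_normBlock_zero, eval_mul, eval_C] at hν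
  rw [mul_assoc, hν]

variable (p) in
lemma exists_pow_four_dvd_coeff_blockSum_normBlock_sub (hp : 3 < p) :
    ∃ w, ∀ n < p - 1, (p : ℤ_[p]) ^ 4 ∣
      (blockSum (C (p : ℤ_[p])) X (normBlock ℤ_[p] p) 3).coeff n -
        p ^ 3 * (blockSumLead (normBlockQuot p) w).coeff n := by
  choose z hz using exists_normBlock_sub_blockExpansion_mem hp
  exact ⟨_, fun n hn => pow_four_dvd_coeff_blockSum_sub hn fun m _ => hz m⟩

lemma pow_mul_factorial_mul_hsum_eq_coe (n k : ℕ) :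
    (p ^ k * k ! * hsum p n (p * k) : ℚ_[p]) =
      n ! * ((blockSum (C (p : ℤ_[p])) X (normBlock ℤ_[p] p) k).coeff n : ℤ_[p]) := by
  have hmap := map_blockSum (mapRingHom PadicInt.Coe.ringHom) (C (p : ℤ_[p])) X
    (normBlock ℤ_[p] p) k
  simp only [coe_mapRingHom, map_normBlock _ (isUnit_eval_risingPoly _), map_X,
    map_natCast] at hmap
  rw [pow_mul_factorial_mul_hsum (NeZero.ne p), ← hmap, coeff_map]
  rfl

lemma exists_six_mul_hsum_eq {n : ℕ} (hp : 3 < p) (hn : n + 1 < p) :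
    ∃ (y : ℤ_[p]) (w : ZMod p), 6 * (hsum p n (3 * p) : ℚ_[p]) = n ! * y ∧
      PadicInt.toZMod y = (blockSumLead (normBlockQuotMod p) w).coeff n := by
  obtain ⟨w, hw⟩ := exists_pow_four_dvd_coeff_blockSum_normBlock_sub p hp
  obtain ⟨t, ht⟩ := hw n (by lia)
  refine ⟨(blockSumLead (normBlockQuot p) w).coeff n + p * t, PadicInt.toZMod w, ?_, ?_⟩
  · have hp3 : (p : ℚ_[p]) ^ 3 ≠ 0 := pow_ne_zero 3 (NeZero.ne _)
    have h := pow_mul_factorial_mul_hsum_eq_coe (p := p) n 3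
    rw [sub_eq_iff_eq_add.1 ht, mul_comm p 3] at h
    apply mul_left_cancel₀ hp3
    simp only [PadicInt.coe_add, PadicInt.coe_mul, PadicInt.coe_pow, PadicInt.coe_natCast] at h ⊢
    rw [show (3 ! : ℚ_[p]) = 6 by norm_num [Nat.factorial]] at h
    linear_combination h
  · simp [normBlockQuotMod, ← map_blockSumLead]

lemma sq_coeff_sub_two {A : Type*} [CommRing A] {q : A[X]} (hq0 : q.coeff 0 = 0)
    (hq : ∀ r, Odd r → q.coeff r = 0) (n : ℕ) :
    (q ^ 2).coeff (n - 2) =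
      ∑ a ∈ Icc 2 (n - 2) with Odd a, q.coeff (a - 1) * q.coeff (n - a - 1) := by
  rw [sq, coeff_mul, Nat.sum_antidiagonal_eq_sum_range_succ_mk]
  refine (sum_of_injOn (· - 1) ?_ ?_ ?_ ?_).symm
  · intro a ha b hb hab
    simp only [coe_filter, mem_Icc, Set.mem_ofPred_eq] at ha hb hab
    lia
  · intro a ha
    simp only [coe_filter, mem_Icc, Set.mem_ofPred_eq, coe_range, Set.mem_Iio] at ha ⊢
    lia
  · intro r hr hr'
    rw [mem_range] at hr
    rcases Nat.even_or_odd r with hr2 | hr2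
    · simp only [coe_filter, mem_Icc, Set.mem_image, Set.mem_ofPred_eq, not_exists, not_and] at hr'
      have := hr' (r + 1)
      obtain rfl | hr3 : r = 0 ∨ n - 2 - r = 0 := by grind
      · rw [hq0, zero_mul]
      · rw [hr3, hq0, mul_zero]
    · rw [hq r hr2, zero_mul]
  · intro a ha
    rw [mem_filter, mem_Icc] at ha
    simp only
    rw [show n - 2 - (a - 1) = n - a - 1 by lia]

lemma two_mul_sum_mul_eq {A : Type*} [CommRing A] {s : Finset ℕ} {n : ℕ} {t : ℕ → A}
    (hs : ∀ a ∈ s, a ≤ n ∧ n - a ∈ s) (ht : ∀ a ∈ s, t (n - a) = t a) :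
    2 * ∑ a ∈ s, a * t a = n * ∑ a ∈ s, t a := by
  have hrefl : ∑ a ∈ s, a * t a = ∑ a ∈ s, (n - a) * t a :=
    sum_nbij' (n - ·) (n - ·) (fun a ha => (hs a ha).2) (fun a ha => (hs a ha).2)
      (fun a ha => Nat.sub_sub_self (hs a ha).1) (fun a ha => Nat.sub_sub_self (hs a ha).1)
      fun a ha => by rw [ht a ha, Nat.cast_sub (hs a ha).1, sub_sub_cancel]
  rw [two_mul]
  nth_rw 1 [hrefl]
  rw [← sum_add_distrib, mul_sum]
  exact sum_congr rfl fun a _ => by ring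

lemma bounds_of_mem_filter_odd {n a : ℕ} (hn : Even n) (ha : a ∈ {a ∈ Icc 2 (n - 2) | Odd a}) :
    a ≤ n ∧ (Odd a ∧ 3 ≤ a) ∧ Odd (n - a) ∧ 3 ≤ n - a := by
  rw [mem_filter, mem_Icc] at ha
  grind

lemma two_mul_sum_coeff_mul_coeff {A : Type*} [CommRing A] {q : A[X]} (hq0 : q.coeff 0 = 0)
    (hq : ∀ r, Odd r → q.coeff r = 0) {n : ℕ} (hn : Even n) :
    2 * ∑ a ∈ Icc 2 (n - 2) with Odd a,
        (2 * n - a + 3) * (q.coeff (a - 1) * q.coeff (n - a - 1)) =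
      (3 * n + 6) * (q ^ 2).coeff (n - 2) := by
  set t : ℕ → A := fun a => q.coeff (a - 1) * q.coeff (n - a - 1) with ht
  have hsymm : 2 * ∑ a ∈ Icc 2 (n - 2) with Odd a, a * t a =
      n * ∑ a ∈ Icc 2 (n - 2) with Odd a, t a :=
    two_mul_sum_mul_eq (fun a ha => by grind) fun a ha => by
      simp only [t, Nat.sub_sub_self (bounds_of_mem_filter_odd hn ha).1, mul_comm]
  have hsplit : ∑ a ∈ Icc 2 (n - 2) with Odd a, (2 * n - a + 3) * t a =
      (2 * n + 3) * ∑ a ∈ Icc 2 (n - 2) with Odd a, t a -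
        ∑ a ∈ Icc 2 (n - 2) with Odd a, a * t a := by
    rw [mul_sum, ← sum_sub_distrib]
    exact sum_congr rfl fun a _ => by ring
  rw [hsplit, sq_coeff_sub_two hq0 hq, ← ht]
  linear_combination -hsymm

lemma exists_coe_eq_bernoulli_div {a : ℕ} (ha : Odd a) (ha3 : 3 ≤ a) (hap : a + 2 ≤ p) :
    ∃ c : ℤ_[p], (c : ℚ_[p]) = (_root_.bernoulli (p - a) / a : ℚ) ∧
      PadicInt.toZMod c = -(normBlockQuotMod p).coeff (a - 1) := by
  obtain ⟨u, hu⟩ := isUnit_natCast_padicInt (p := p) (k := a)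
    (Nat.not_dvd_of_pos_of_lt (by lia) (by lia))
  obtain ⟨c, hc⟩ : (a : ℤ_[p]) ∣ padicBernoulli p (p - a) := hu ▸ u.coe_dvd
  have ha0 : (a : ZMod p) ≠ 0 := by
    rw [Ne, ZMod.natCast_eq_zero_iff]
    exact Nat.not_dvd_of_pos_of_lt (by lia) (by lia)
  refine ⟨c, ?_, mul_left_cancel₀ ha0 ?_⟩
  · push_cast
    rw [← coe_padicBernoulli (p := p) (k := p - a) (by lia), hc, PadicInt.coe_mul,
      PadicInt.coe_natCast, mul_div_cancel_left₀ _ (by norm_cast; lia)]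
  · rw [mul_neg, mul_coeff_normBlockQuotMod ha ha3 hap, neg_neg, hc, map_mul, map_natCast]

lemma exists_six_mul_hsum_eq_and_two_mul {n : ℕ} (hn : Even n) (hn2 : 2 ≤ n) (hp : n + 2 < p) :
    ∃ y : ℤ_[p], 6 * (hsum p n (3 * p) : ℚ_[p]) = n ! * y ∧
      2 * PadicInt.toZMod y = (3 * n + 6) * ((normBlockQuotMod p) ^ 2).coeff (n - 2) := by
  obtain ⟨y, w, hy, hyw⟩ := exists_six_mul_hsum_eq (p := p) (n := n) (by lia) (by lia)
  refine ⟨y, hy, ?_⟩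
  obtain ⟨m, rfl⟩ := Nat.exists_eq_add_of_le' hn2
  have heven : (normBlockQuotMod p).comp (-X) = normBlockQuotMod p :=
    comp_neg_X_eq_self fun _ => coeff_normBlockQuotMod_eq_zero
  rw [hyw, two_mul_coeff_blockSumLead heven w (by simpa [parity_simps] using hn)]
  push_cast [Nat.add_sub_cancel]
  ring

lemma exists_coe_eq_sum_and_two_mul {n : ℕ} (hn : Even n) (hp : n + 2 < p) :
    ∃ s : ℤ_[p], (s : ℚ_[p]) = (∑ a ∈ Icc 2 (n - 2) with Odd a,
        (2 * (n : ℚ) - a + 3) * _root_.bernoulli (p - a) * _root_.bernoulli (p - n + a) /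
          ((a : ℚ) * (n - a)) : ℚ) ∧
      2 * PadicInt.toZMod s = (3 * n + 6) * ((normBlockQuotMod p) ^ 2).coeff (n - 2) := by
  choose! c hc hcmod using fun a => exists_coe_eq_bernoulli_div (p := p) (a := a)
  refine ⟨∑ a ∈ Icc 2 (n - 2) with Odd a, (((2 * n + 3 : ℕ) : ℤ_[p]) - a) * (c a * c (n - a)),
    ?_, ?_⟩
  · simp only [PadicInt.coe_sum, PadicInt.coe_mul, PadicInt.coe_sub, PadicInt.coe_natCast]
    push_cast
    refine sum_congr rfl fun a ha => ?_
    obtain ⟨han, ⟨ha, ha3⟩, hna, hna3⟩ := bounds_of_mem_filter_odd hn ha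
    rw [hc a ha ha3 (by lia), hc (n - a) hna hna3 (by lia), show p - (n - a) = p - n + a by lia]
    push_cast [Nat.cast_sub han]
    rw [mul_assoc _ (_ : ℚ_[p]), mul_div_assoc, mul_div_mul_comm]
    ring
  · have hq0 : (normBlockQuotMod p).coeff 0 = 0 := by
      rw [normBlockQuotMod, coeff_map, coeff_normBlockQuot_eq_zero (by simp), map_zero]
    rw [← two_mul_sum_coeff_mul_coeff hq0 (fun _ => coeff_normBlockQuotMod_eq_zero) hn, map_sum]
    refine congrArg _ (sum_congr rfl fun a ha => ?_)
    obtain ⟨-, ⟨ha, ha3⟩, hna, hna3⟩ := bounds_of_mem_filter_odd hn ha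
    simp only [map_mul, map_sub, map_natCast, hcmod a ha ha3 (by lia),
      hcmod (n - a) hna hna3 (by lia)]
    push_cast
    ring

lemma ratCong_of_mul_sub_eq {r : ℕ} {x y : ℚ} {u e : ℤ_[p]} (hu : IsUnit u)
    (h : (u * (x - y) : ℚ_[p]) = p ^ r * e) : ratCong p r x y := by
  have hpr : (p : ℚ) ^ r ≠ 0 := pow_ne_zero r (NeZero.ne _)
  refine ⟨(x - y) / p ^ r, (mul_div_cancel₀ _ hpr).symm, ?_⟩
  have hnorm : ‖(((x - y) / p ^ r : ℚ) : ℚ_[p])‖ ≤ 1 := by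
    have hpr' : (p : ℚ_[p]) ^ r ≠ 0 := pow_ne_zero r (NeZero.ne _)
    have hue : (u : ℚ_[p]) * ((x - y) / p ^ r : ℚ) = e := by
      push_cast
      rw [← mul_div_assoc, h, mul_div_cancel_left₀ _ hpr']
    have hnorm_e := congrArg norm hue
    rw [norm_mul, ← PadicInt.norm_def, PadicInt.isUnit_iff.1 hu, one_mul] at hnorm_e
    exact hnorm_e.trans_le e.2
  have hden := PadicInt.isUnit_den _ hnorm
  rw [PadicInt.isUnit_iff, PadicInt.norm_natCast_eq_one_iff] at hden
  exact (Nat.Prime.coprime_iff_not_dvd Fact.out).1 hden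

end Reduction

theorem stmt_10 (p n : ℕ) (hn : Even n) (hp : p.Prime) (hpn : n + 2 < p) :
    ratCong p 1 (hsum p n (3 * p))
      ((Nat.factorial n : ℚ) / 6 *
        ∑ a ∈ (Finset.Icc 2 (n - 2)).filter (fun a => Odd a),
          (2 * (n : ℚ) - a + 3) * bernoulli (p - a) * bernoulli (p - n + a) /
            ((a : ℚ) * (n - a))) := by
  have : Fact p.Prime := ⟨hp⟩
  rcases Nat.eq_zero_or_pos n with rfl | hpos
  · exact ⟨0, by simp [hsum, hp.ne_zero], by simpa using hp.ne_one⟩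
  have hn2 : 2 ≤ n := Nat.le_of_dvd hpos hn.two_dvd
  obtain ⟨y, hy, hymod⟩ := exists_six_mul_hsum_eq_and_two_mul hn hn2 hpn
  obtain ⟨s, hs, hsmod⟩ := exists_coe_eq_sum_and_two_mul hn hpn
  obtain ⟨e, he⟩ : (p : ℤ_[p]) ∣ (2 : ℕ) * (y - s) := by
    rw [natCast_dvd_padicInt_iff, map_mul, map_natCast, map_sub]
    linear_combination hymod - hsmod
  have hunit : IsUnit ((12 : ℕ) : ℤ_[p]) := isUnit_natCast_padicInt fun h => by
    have := (hp.dvd_factorial (n := 4)).1 (h.trans (by decide))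
    lia
  refine ratCong_of_mul_sub_eq (e := n ! * e) hunit ?_
  have he' := congrArg ((↑) : ℤ_[p] → ℚ_[p]) he
  simp only [PadicInt.coe_sub, PadicInt.coe_mul, PadicInt.coe_natCast] at he' ⊢
  rw [Rat.cast_mul, ← hs]
  push_cast at he' ⊢
  linear_combination 2 * hy + (n ! : ℚ_[p]) * he'
end

section
/- Let n be an even integer and p > n+2 a prime. Then the sum of 1/(l_1⋯l_n) over all n-tuples of positive integers with l_1+⋯+l_n = 2p and each l_i < p is congruent modulo p to (n!/2)·Σ_{a odd, 3 ≤ a ≤ n-3} B_{p-a}·B_{p-n+a}/(a(n-a)). -/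
/-- Sum of `1/(l₁⋯lₙ)` over positive `n`-tuples summing to `N` with each `lᵢ < p`. -/
def hsumLt (p n N : ℕ) : ℚ :=
  ∑ l ∈ (Fintype.piFinset fun _ : Fin n => Finset.Ico 1 p) |>.filter
      (fun l => ∑ i, l i = N),
    ∏ i, (1 : ℚ) / l i

/-!
Since `binom(p, l) = (p / l) binom(p - 1, l - 1)` and `binom(p - 1, l - 1) ≡ (-1)^(l - 1) mod p`,
for even `n` the sum times `p^n` is congruent modulo `p^(n+1)` to the coefficient of `X^(2p)` in
`((1 + X)^p - (1 + X^p))^n`. Expanding the power, this coefficient times `κ = binom(2p, p)` is the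
`n`-th difference at `0` of `P(x) Q(x - 1)`, where `P(x) = binom(px, p)` and `Q` is a linear
correction of `P`.

Newton's identities for the roots `0, …, p - 1` of the falling factorial show that the `m`-th
coefficient of `P` is `≡ -p^m B_{p-m} / m mod p^(m+1)` for `1 < m < p`. Hence the terms
`x^a (x - 1)^b` with `a + b > n` do not matter modulo `p^(n+1)`, and the difference is `n!` times
the coefficient of `X^n` in `P Q`. This is a convolution of Bernoulli numbers, because
`κ ≡ 2 mod p^2` makes the contributions of the linear coefficients of `P` and `Q` cancel.
-/

open Finset
open Polynomial (C X)
open scoped Polynomial Nat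

/-- The fractional ideal `p^k ℤ_(p)` of `ℚ`. The case `k = 0` is the ring of `p`-integral
rationals. -/
def padicIdeal (p : ℕ) [Fact p.Prime] (k : ℕ) : Submodule (Rat.padicValuation p).integer ℚ :=
  (Rat.padicValuation p).leSubmodule (WithZero.exp (-(k : ℤ)))

namespace padicIdeal

variable {p : ℕ} [Fact p.Prime] {k l : ℕ} {x y : ℚ}

theorem mem_iff : x ∈ padicIdeal p k ↔ Rat.padicValuation p x ≤ WithZero.exp (-(k : ℤ)) :=
  Iff.rfl

theorem antitone : Antitone (padicIdeal p) := fun _ _ h =>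
  (Rat.padicValuation p).leSubmodule_monotone (WithZero.exp_le_exp.2 (by simpa using h))

theorem mul_mem (hx : x ∈ padicIdeal p k) (hy : y ∈ padicIdeal p l) :
    x * y ∈ padicIdeal p (k + l) := by
  have := mul_le_mul' (mem_iff.1 hx) (mem_iff.1 hy)
  rwa [← map_mul, ← WithZero.exp_add, ← neg_add, ← Nat.cast_add, ← mem_iff] at this

theorem mul_mem_left (hx : x ∈ padicIdeal p 0) (hy : y ∈ padicIdeal p k) :
    x * y ∈ padicIdeal p k := by
  simpa only [zero_add] using mul_mem hx hy

theorem mul_mem_right (hx : x ∈ padicIdeal p k) (hy : y ∈ padicIdeal p 0) :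
    x * y ∈ padicIdeal p k :=
  mul_mem hx hy

theorem intCast_mem_zero (z : ℤ) : (z : ℚ) ∈ padicIdeal p 0 := by
  rw [mem_iff, Rat.padicValuation_cast]
  exact Int.padicValuation_le_one p z

theorem natCast_mem_zero (n : ℕ) : (n : ℚ) ∈ padicIdeal p 0 :=
  mod_cast intCast_mem_zero n

theorem pow_mul_mem_iff : (p : ℚ) ^ k * x ∈ padicIdeal p (k + l) ↔ x ∈ padicIdeal p l := by
  simp only [mem_iff, map_mul, map_pow, Rat.padicValuation_self, ← WithZero.exp_nsmul]
  rw [Nat.cast_add, neg_add, WithZero.exp_add, smul_neg, nsmul_one]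
  exact mul_le_mul_iff_right₀ WithZero.exp_pos

theorem natCast_pow_mem : (p : ℚ) ^ k ∈ padicIdeal p k := by
  simpa using (pow_mul_mem_iff (l := 0)).2 (natCast_mem_zero 1)

theorem mem_iff_exists_pow_mul :
    x ∈ padicIdeal p k ↔ ∃ y ∈ padicIdeal p 0, x = (p : ℚ) ^ k * y := by
  constructor
  · intro hx
    have hp : (p : ℚ) ^ k ≠ 0 := pow_ne_zero _ (Nat.cast_ne_zero.2 (Fact.out : p.Prime).ne_zero)
    refine ⟨x / (p : ℚ) ^ k, ?_, (mul_div_cancel₀ x hp).symm⟩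
    rwa [← pow_mul_mem_iff (k := k), mul_div_cancel₀ x hp]
  · rintro ⟨y, hy, rfl⟩
    exact pow_mul_mem_iff.2 hy

theorem intCast_mem_of_dvd {z : ℤ} (h : (p : ℤ) ^ k ∣ z) : (z : ℚ) ∈ padicIdeal p k := by
  obtain ⟨c, rfl⟩ := h
  push_cast
  exact pow_mul_mem_iff.2 (intCast_mem_zero c)

theorem intCast_mem_one_iff {z : ℤ} : (z : ℚ) ∈ padicIdeal p 1 ↔ (p : ℤ) ∣ z := by
  rw [mem_iff, ← WithZero.lt_mul_exp_iff_le WithZero.exp_ne_zero, Rat.padicValuation_cast,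
    ← WithZero.exp_add, ← Int.padicValuation_lt_one_iff]
  simp

theorem mul_mem_iff_of_not_dvd {z : ℤ} (hz : ¬ (p : ℤ) ∣ z) :
    (z : ℚ) * x ∈ padicIdeal p k ↔ x ∈ padicIdeal p k := by
  rw [mem_iff, map_mul, Rat.padicValuation_cast, Int.padicValuation_eq_one_iff.2 hz, one_mul,
    mem_iff]

theorem inv_natCast_mem_zero {n : ℕ} (hn : ¬ p ∣ n) : (n : ℚ)⁻¹ ∈ padicIdeal p 0 := by
  have hz : ¬ (p : ℤ) ∣ (n : ℤ) := mod_cast hn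
  have hn₀ : (n : ℚ) ≠ 0 := by rintro h; exact hn (by simp_all)
  rw [← mul_mem_iff_of_not_dvd hz, Int.cast_natCast, mul_inv_cancel₀ hn₀]
  exact mod_cast natCast_mem_zero 1

theorem mul_smodEq_mul {x' y' : ℚ} (hx : x ∈ padicIdeal p k) (hy : y ∈ padicIdeal p l)
    (hxx' : x ≡ x' [SMOD padicIdeal p (k + 1)]) (hyy' : y ≡ y' [SMOD padicIdeal p (l + 1)]) :
    x * y ≡ x' * y' [SMOD padicIdeal p (k + l + 1)] := by
  rw [SModEq.sub_mem] at hxx' hyy' ⊢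
  have hx' : x' ∈ padicIdeal p k := by
    simpa only [sub_sub_cancel] using sub_mem hx (antitone k.le_succ hxx')
  have hxy : (x - x') * y ∈ padicIdeal p (k + l + 1) := by
    simpa only [add_right_comm] using mul_mem hxx' hy
  have hyx : x' * (y - y') ∈ padicIdeal p (k + l + 1) := by
    simpa only [add_assoc] using mul_mem hx' hyy'
  convert add_mem hxy hyx using 1
  ring

end padicIdeal

theorem ratCong_iff_smodEq {p k : ℕ} [Fact p.Prime] {x y : ℚ} :
    ratCong p k x y ↔ x ≡ y [SMOD padicIdeal p k] := by
  have integral_iff (z : ℚ) : ¬ p ∣ z.den ↔ z ∈ padicIdeal p 0 :=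
    Rat.padicValuation_le_one_iff.symm
  simp only [ratCong, SModEq.sub_mem, padicIdeal.mem_iff_exists_pow_mul (x := x - y),
    integral_iff, and_comm]

section Bernoulli

variable {p : ℕ} [Fact p.Prime] {s : ℕ}

theorem bernoulli_mem_padicIdeal_zero (hs : ¬ p - 1 ∣ s) : bernoulli s ∈ padicIdeal p 0 := by
  rcases Nat.even_or_odd' s with ⟨t, rfl | rfl⟩
  · obtain ⟨z, hz⟩ := Bernoulli.vonStaudt_clausen t
    rw [eq_sub_of_add_eq hz.symm]
    refine sub_mem (padicIdeal.intCast_mem_zero z) (sum_mem fun q hq => ?_)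
    obtain ⟨-, hq, hqt⟩ := mem_filter.1 hq
    have hpq : ¬ p ∣ q := fun h => hs ((Nat.prime_dvd_prime_iff_eq Fact.out hq).1 h ▸ hqt)
    simpa only [one_div] using padicIdeal.inv_natCast_mem_zero hpq
  · rcases Nat.eq_zero_or_pos t with rfl | ht
    · have hp : p ≠ 2 := by rintro rfl; exact hs (one_dvd _)
      have h2 : ¬ p ∣ 2 := fun h => hp ((Nat.prime_dvd_prime_iff_eq Fact.out Nat.prime_two).1 h)
      simpa [bernoulli_one, neg_div] using padicIdeal.inv_natCast_mem_zero h2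
    · rw [bernoulli_eq_zero_of_odd (odd_two_mul_add_one t) (by omega)]
      exact zero_mem _

theorem bernoulli_mem_padicIdeal_zero_of_lt (hs : s + 1 < p) : bernoulli s ∈ padicIdeal p 0 := by
  rcases Nat.eq_zero_or_pos s with rfl | hs₀
  · simpa using padicIdeal.natCast_mem_zero (p := p) 1
  · exact bernoulli_mem_padicIdeal_zero (Nat.not_dvd_of_pos_of_lt hs₀ (by omega))

theorem sum_range_prime_pow_smodEq (hs : s + 1 < p) :
    ∑ i ∈ range p, (i : ℚ) ^ s ≡ p * bernoulli s [SMOD padicIdeal p 2] := by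
  have hs₁ : ((s + 1 : ℕ) : ℚ) ≠ 0 := Nat.cast_ne_zero.2 s.succ_ne_zero
  have last_term : bernoulli s * ((s + 1).choose s : ℕ) * (p : ℚ) ^ (s + 1 - s) / (s + 1)
      = p * bernoulli s := by
    push_cast at hs₁
    rw [Nat.choose_succ_self_right, Nat.add_sub_cancel_left]
    push_cast
    field_simp
  rw [SModEq.sub_mem, sum_range_pow, sum_range_succ, last_term, add_sub_cancel_right]
  refine sum_mem fun i hi => ?_
  have hi : i < s := mem_range.1 hi
  have h_pow : (p : ℚ) ^ (s + 1 - i) ∈ padicIdeal p 2 :=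
    padicIdeal.antitone (by omega) padicIdeal.natCast_pow_mem
  have h_inv : ((s : ℚ) + 1)⁻¹ ∈ padicIdeal p 0 := mod_cast
    padicIdeal.inv_natCast_mem_zero (Nat.not_dvd_of_pos_of_lt s.succ_pos hs)
  have h_coeff : bernoulli i * ((s + 1).choose i : ℕ) ∈ padicIdeal p 0 :=
    padicIdeal.mul_mem (bernoulli_mem_padicIdeal_zero_of_lt (by omega))
      (padicIdeal.natCast_mem_zero _)
  exact padicIdeal.mul_mem_right (padicIdeal.mul_mem_left h_coeff h_pow) h_inv

end Bernoulli

section Newton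

variable {R σ : Type*} [CommRing R] [Fintype σ] (f : σ → R) (k : ℕ)

theorem natCast_mul_esymm_map_eq_sum :
    k * (univ.val.map f).esymm k = (-1) ^ (k + 1) *
      ∑ a ∈ antidiagonal k with a.1 < k,
        (-1) ^ a.1 * (univ.val.map f).esymm a.1 * ∑ i, f i ^ a.2 := by
  simpa [MvPolynomial.aeval_esymm_eq_multiset_esymm, MvPolynomial.psum] using
    congrArg (MvPolynomial.aeval f) (MvPolynomial.mul_esymm_eq_sum σ ℤ k)

variable {f k} {q : R}

theorem dvd_esymm_map_of_dvd_sum_pow (hq : Prime q) (hk : ¬ q ∣ (k : R))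
    (hsum : ∀ j, 0 < j → j ≤ k → q ∣ ∑ i, f i ^ j) : q ∣ (univ.val.map f).esymm k := by
  refine (hq.dvd_or_dvd ?_).resolve_left hk
  rw [natCast_mul_esymm_map_eq_sum]
  refine (dvd_sum fun a ha => ?_).mul_left _
  simp only [mem_filter, HasAntidiagonal.mem_antidiagonal] at ha
  exact (hsum _ (by omega) (by omega)).mul_left _

theorem sq_dvd_mul_esymm_map_add_sum_pow (hq : Prime q) (hk : 0 < k)
    (hk_lt : ∀ j, 0 < j → j < k → ¬ q ∣ (j : R))
    (hsum : ∀ j, 0 < j → j < k → q ∣ ∑ i, f i ^ j) :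
    q ^ 2 ∣ k * (univ.val.map f).esymm k + (-1) ^ k * ∑ i, f i ^ k := by
  have first_mem : (0, k) ∈ {a ∈ antidiagonal k | a.1 < k} := by simp [hk]
  rw [natCast_mul_esymm_map_eq_sum, ← add_sum_erase _ _ first_mem]
  have rest : q ^ 2 ∣ ∑ a ∈ {a ∈ antidiagonal k | a.1 < k}.erase (0, k),
      (-1) ^ a.1 * (univ.val.map f).esymm a.1 * ∑ i, f i ^ a.2 := by
    refine dvd_sum fun a ha => ?_
    simp only [mem_erase, mem_filter, HasAntidiagonal.mem_antidiagonal, ne_eq, Prod.ext_iff] at ha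
    rw [sq]
    refine mul_dvd_mul (Dvd.dvd.mul_left ?_ _) (hsum _ (by omega) (by omega))
    exact dvd_esymm_map_of_dvd_sum_pow hq (hk_lt _ (by omega) (by omega))
      fun j hj hj' => hsum j hj (by omega)
  convert rest.mul_left ((-1) ^ (k + 1)) using 1
  simp only [pow_succ, mul_neg, mul_one, pow_zero, Multiset.esymm, Multiset.powersetCard_zero_left,
    Multiset.map_singleton, Multiset.prod_zero, Multiset.sum_singleton, one_mul, neg_mul]
  ring

end Newton

section DescPochhammer

theorem descPochhammer_eq_prod_range (R : Type*) [CommRing R] (n : ℕ) :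
    descPochhammer R n = ∏ i ∈ range n, (X - C (i : R)) := by
  induction n with
  | zero => simp
  | succ n ih => rw [descPochhammer_succ_right, prod_range_succ, ih, map_natCast]

theorem descPochhammer_coeff_eq_esymm (R : Type*) [CommRing R] {n m : ℕ} (h : m ≤ n) :
    (descPochhammer R n).coeff m =
      (-1) ^ (n - m) * (univ.val.map fun i : Fin n => (i : R)).esymm (n - m) := by
  have hcard : (univ.val.map fun i : Fin n => (i : R)).card = n := by simp
  have hcoeff := Multiset.prod_X_sub_C_coeff (univ.val.map fun i : Fin n => (i : R))
    (h.trans_eq hcard.symm)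
  rw [hcard, Multiset.map_map] at hcoeff
  rw [← hcoeff, descPochhammer_eq_prod_range, prod_range]
  rfl

variable {p : ℕ} [Fact p.Prime]

theorem dvd_sum_range_prime_pow {s : ℕ} (hs : s + 1 < p) :
    (p : ℤ) ∣ ∑ i : Fin p, (i : ℤ) ^ s := by
  have hmem : (p : ℚ) * bernoulli s ∈ padicIdeal p 1 := by
    simpa using padicIdeal.pow_mul_mem_iff (k := 1) (l := 0) |>.2
      (bernoulli_mem_padicIdeal_zero_of_lt hs)
  have hsum := (sum_range_prime_pow_smodEq hs).mono (padicIdeal.antitone one_le_two)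
  rw [← padicIdeal.intCast_mem_one_iff, ← SModEq.zero]
  push_cast
  rw [← sum_range fun i => (i : ℚ) ^ s]
  exact hsum.trans (SModEq.zero.2 hmem)

variable {m : ℕ}

theorem dvd_descPochhammer_prime_coeff (h₁ : 1 < m) (hm : m < p) :
    (p : ℤ) ∣ (descPochhammer ℤ p).coeff m := by
  rw [descPochhammer_coeff_eq_esymm ℤ hm.le]
  refine (dvd_esymm_map_of_dvd_sum_pow (Nat.prime_iff_prime_int.1 Fact.out) ?_ ?_).mul_left _
  · exact_mod_cast Nat.not_dvd_of_pos_of_lt (by omega) (by omega)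
  · exact fun j _ _ => dvd_sum_range_prime_pow (by omega)

theorem sq_dvd_mul_descPochhammer_prime_coeff_add_sum_pow (h₁ : 1 < m) (hm : m < p) :
    (p : ℤ) ^ 2 ∣ (p - m : ℕ) * (descPochhammer ℤ p).coeff m + ∑ i : Fin p, (i : ℤ) ^ (p - m) := by
  have newton := sq_dvd_mul_esymm_map_add_sum_pow (f := fun i : Fin p => (i : ℤ)) (k := p - m)
    (Nat.prime_iff_prime_int.1 (Fact.out : p.Prime)) (by omega)
    (fun j _ _ => mod_cast Nat.not_dvd_of_pos_of_lt (by omega) (by omega))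
    (fun j _ _ => dvd_sum_range_prime_pow (by omega))
  rw [descPochhammer_coeff_eq_esymm ℤ hm.le]
  have sign : ((-1) ^ (p - m) * (-1) ^ (p - m) : ℤ) = 1 := by rw [← mul_pow]; norm_num
  refine (newton.mul_left ((-1) ^ (p - m))).trans (dvd_of_eq ?_)
  linear_combination (∑ i : Fin p, (i : ℤ) ^ (p - m)) * sign

end DescPochhammer

section Factorial

variable {p : ℕ} [Fact p.Prime]

theorem not_dvd_prime_pred_factorial : ¬ (p : ℤ) ∣ ((p - 1)! : ℤ) := by
  have hp : p.Prime := Fact.out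
  rw [Int.natCast_dvd_natCast, hp.dvd_factorial]
  have := hp.pos
  omega

theorem sub_mul_prime_pred_factorial_modEq {m : ℕ} (hm : m ≤ p) :
    ((p - m : ℕ) * (p - 1)! : ℤ) ≡ m [ZMOD p] := by
  rw [← ZMod.intCast_eq_intCast_iff]
  push_cast [hm]
  rw [ZMod.wilsons_lemma]
  simp

end Factorial

/-- The polynomial in `x` interpolating the binomial coefficient `(k * x).choose k`. -/
noncomputable def chooseMulPoly (k : ℕ) : ℚ[X] :=
  C (k ! : ℚ)⁻¹ * (descPochhammer ℚ k).comp (C (k : ℚ) * X)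

namespace chooseMulPoly

theorem eval_eq (k : ℕ) (x : ℚ) :
    (chooseMulPoly k).eval x = (descPochhammer ℚ k).eval (k * x) / k ! := by
  simp [chooseMulPoly, div_eq_inv_mul]

theorem eval_natCast (k j : ℕ) : (chooseMulPoly k).eval (j : ℚ) = ((k * j).choose k : ℕ) := by
  rw [eval_eq, Nat.cast_choose_eq_descPochhammer_div, Nat.cast_mul]

theorem eval_natCast_mul_eval_natCast_sub_one (k j : ℕ) :
    (chooseMulPoly k).eval (j : ℚ) * (chooseMulPoly k).eval (j - 1 : ℚ) =
      k.centralBinom * ((k * j).choose (2 * k) : ℕ) := by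
  have hmul := congrArg (Polynomial.eval ((k * j : ℕ) : ℚ)) (descPochhammer_mul ℚ k k)
  simp only [Polynomial.eval_mul, Polynomial.eval_comp, Polynomial.eval_sub, Polynomial.eval_X,
    Polynomial.eval_natCast, ← two_mul] at hmul
  have hcentral : (k.centralBinom : ℚ) = (2 * k)! / (k ! * k !) := by
    rw [Nat.centralBinom, two_mul, Nat.cast_add_choose]
  rw [eval_eq, eval_eq, mul_sub_one, hcentral, Nat.cast_choose_eq_descPochhammer_div, ← hmul,
    Nat.cast_mul]
  field_simp

theorem coeff_eq (k m : ℕ) :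
    (chooseMulPoly k).coeff m = (k : ℚ) ^ m * ((descPochhammer ℤ k).coeff m : ℤ) / k ! := by
  rw [chooseMulPoly, Polynomial.coeff_C_mul, Polynomial.comp_C_mul_X_coeff,
    ← descPochhammer_map (Int.castRingHom ℚ), Polynomial.coeff_map, eq_intCast]
  ring

theorem coeff_zero {k : ℕ} (hk : k ≠ 0) : (chooseMulPoly k).coeff 0 = 0 := by
  simp [Polynomial.coeff_zero_eq_eval_zero, eval_eq, hk, descPochhammer_ne_zero_eval_zero]

theorem coeff_one {k : ℕ} (hk : k ≠ 0) : (chooseMulPoly k).coeff 1 = (-1) ^ (k - 1) := by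
  obtain ⟨k, rfl⟩ := Nat.exists_eq_succ_of_ne_zero hk
  have hcoeff : (descPochhammer ℤ (k + 1)).coeff 1 = (-1) ^ k * k ! := by
    rw [descPochhammer_succ_left, Polynomial.coeff_X_mul, Polynomial.coeff_zero_eq_eval_zero,
      Polynomial.eval_comp, descPochhammer_eval_eq_prod_range]
    have factor (i : ℕ) : (X - 1 : ℤ[X]).eval 0 - i = -1 * (i + 1 : ℕ) := by
      simp only [Polynomial.eval_sub, Polynomial.eval_X, Polynomial.eval_one]
      push_cast
      ring
    simp_rw [factor]
    rw [prod_mul_distrib, prod_const, card_range, ← Nat.cast_prod, prod_range_add_one_eq_factorial]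
  rw [coeff_eq, Nat.succ_eq_add_one, hcoeff, Nat.factorial_succ]
  push_cast
  field_simp

theorem coeff_eq_zero_of_lt {k m : ℕ} (h : k < m) : (chooseMulPoly k).coeff m = 0 := by
  rw [coeff_eq, Polynomial.coeff_eq_zero_of_natDegree_lt (by rwa [descPochhammer_natDegree])]
  simp

section Prime

variable {p : ℕ} [Fact p.Prime] {m : ℕ}

theorem factorial_pred_mul_coeff (hm : m ≠ 0) :
    ((p - 1)! : ℤ) * (chooseMulPoly p).coeff m =
      (p : ℚ) ^ (m - 1) * ((descPochhammer ℤ p).coeff m : ℤ) := by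
  have hp : (p : ℚ) ≠ 0 := NeZero.ne _
  rw [coeff_eq, ← Nat.mul_factorial_pred (NeZero.ne p), ← pow_sub_one_mul hm]
  push_cast
  field_simp

theorem coeff_mem_pred (hm : m ≠ 0) : (chooseMulPoly p).coeff m ∈ padicIdeal p (m - 1) := by
  rw [← padicIdeal.mul_mem_iff_of_not_dvd not_dvd_prime_pred_factorial, factorial_pred_mul_coeff hm]
  exact padicIdeal.pow_mul_mem_iff.2 (padicIdeal.intCast_mem_zero _)

theorem coeff_mem_zero (m : ℕ) : (chooseMulPoly p).coeff m ∈ padicIdeal p 0 := by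
  rcases eq_or_ne m 0 with rfl | hm
  · rw [coeff_zero (NeZero.ne p)]
    exact zero_mem _
  · exact padicIdeal.antitone (Nat.zero_le _) (coeff_mem_pred hm)

theorem coeff_mem (h₁ : 1 < m) (hm : m < p) : (chooseMulPoly p).coeff m ∈ padicIdeal p m := by
  rw [← padicIdeal.mul_mem_iff_of_not_dvd not_dvd_prime_pred_factorial,
    factorial_pred_mul_coeff (by omega)]
  have h := (padicIdeal.pow_mul_mem_iff (k := m - 1)).2
    (padicIdeal.intCast_mem_one_iff.2 (dvd_descPochhammer_prime_coeff h₁ hm))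
  rwa [Nat.sub_add_cancel h₁.le] at h

theorem coeff_smodEq (h₁ : 1 < m) (hm : m < p) :
    (chooseMulPoly p).coeff m ≡ -(p ^ m * bernoulli (p - m) / m) [SMOD padicIdeal p (m + 1)] := by
  set b := (chooseMulPoly p).coeff m
  set d := (descPochhammer ℤ p).coeff m
  have hm₀ : (m : ℚ) ≠ 0 := Nat.cast_ne_zero.2 (by omega)
  have newton : (p - m : ℕ) * d + p * bernoulli (p - m) ∈ padicIdeal p 2 := by
    have h := padicIdeal.intCast_mem_of_dvd
      (sq_dvd_mul_descPochhammer_prime_coeff_add_sum_pow h₁ hm)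
    push_cast at h
    rw [← sum_range fun i => (i : ℚ) ^ (p - m)] at h
    convert sub_mem h (SModEq.sub_mem.1 (sum_range_prime_pow_smodEq (p := p) (s := p - m)
      (by omega))) using 1
    ring
  have scaled : (p - m : ℕ) * ((p - 1)! : ℤ) * b + p ^ m * bernoulli (p - m) ∈
      padicIdeal p (m + 1) := by
    rw [mul_assoc, factorial_pred_mul_coeff (by omega), ← pow_sub_one_mul (by omega : m ≠ 0),
      show m + 1 = m - 1 + 2 by omega]
    convert padicIdeal.pow_mul_mem_iff.2 newton using 1
    ring
  have wilson : ((m - (p - m : ℕ) * (p - 1)! : ℤ) : ℚ) * b ∈ padicIdeal p (m + 1) := by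
    rw [add_comm]
    exact padicIdeal.mul_mem (padicIdeal.intCast_mem_one_iff.2
      (sub_mul_prime_pred_factorial_modEq hm.le).dvd) (coeff_mem h₁ hm)
  rw [SModEq.sub_mem, ← padicIdeal.mul_mem_iff_of_not_dvd (z := m)
    (mod_cast Nat.not_dvd_of_pos_of_lt (by omega) hm)]
  convert add_mem scaled wilson using 1
  push_cast
  field_simp
  ring

theorem coeff_mem_succ_of_even {n : ℕ} (hn : Even n) (hn₂ : 2 ≤ n) (hnp : n + 2 < p)
    (hm : n ≤ m) : (chooseMulPoly p).coeff m ∈ padicIdeal p (n + 1) := by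
  have hp : Odd p := (Fact.out : p.Prime).odd_of_ne_two (by omega)
  rcases hm.eq_or_lt with rfl | hnm
  · have hB : bernoulli (p - n) = 0 :=
      bernoulli_eq_zero_of_odd (Nat.Odd.sub_even (by omega) hp hn) (by omega)
    simpa [hB, SModEq.zero] using coeff_smodEq hn₂ (by omega : n < p)
  rcases lt_trichotomy m p with hmp | rfl | hpm
  · exact padicIdeal.antitone (by omega) (coeff_mem (by omega) hmp)
  · exact padicIdeal.antitone (by omega) (coeff_mem_pred (by omega))
  · rw [coeff_eq_zero_of_lt hpm]
    exact zero_mem _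

theorem coeff_mul_coeff_smodEq {a b : ℕ} (ha : 1 < a) (hap : a < p) (hb : 1 < b) (hbp : b < p) :
    (chooseMulPoly p).coeff a * (chooseMulPoly p).coeff b ≡
      p ^ (a + b) * (bernoulli (p - a) * bernoulli (p - b) / (a * b))
      [SMOD padicIdeal p (a + b + 1)] := by
  convert padicIdeal.mul_smodEq_mul (coeff_mem ha hap) (coeff_mem hb hbp)
    (coeff_smodEq ha hap) (coeff_smodEq hb hbp) using 1
  rw [pow_add]
  field_simp

end Prime

end chooseMulPoly

section FwdDiff

theorem mul_comp_eq_sum_smul {R : Type*} [CommRing R] (P Q S : R[X]) :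
    P * Q.comp S = ∑ a ∈ range (P.natDegree + 1), ∑ b ∈ range (Q.natDegree + 1),
      (P.coeff a * Q.coeff b) • (X ^ a * S ^ b) := by
  nth_rewrite 1 [P.as_sum_range_C_mul_X_pow, Q.as_sum_range_C_mul_X_pow]
  rw [Polynomial.comp, Polynomial.eval₂_finsetSum, sum_mul_sum]
  refine sum_congr rfl fun a _ => sum_congr rfl fun b _ => ?_
  rw [Polynomial.smul_eq_C_mul]
  simp only [Polynomial.eval₂_mul, Polynomial.eval₂_C, Polynomial.eval₂_X_pow, map_mul]
  ring

/-- The linear functional `P ↦ Δⁿ P (0)` on polynomials, where `Δ P = P (X + 1) - P`. -/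
noncomputable def iterFwdDiffAtZero (R : Type*) [CommRing R] (n : ℕ) : R[X] →ₗ[R] R :=
  ∑ k ∈ range (n + 1), ((-1) ^ (n - k) * n.choose k : R) • Polynomial.leval (k : R)

namespace iterFwdDiffAtZero

variable {R : Type*} [CommRing R] {n : ℕ}

theorem apply_eq_sum (P : R[X]) :
    iterFwdDiffAtZero R n P =
      ∑ k ∈ range (n + 1), (-1) ^ (n - k) * n.choose k * P.eval (k : R) := by
  simp [iterFwdDiffAtZero, LinearMap.sum_apply]

theorem apply_eq_fwdDiff (P : R[X]) :
    iterFwdDiffAtZero R n P = (fwdDiff 1)^[n] (fun x => P.eval x) 0 := by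
  simp [apply_eq_sum, fwdDiff_iter_eq_sum_shift]

theorem eq_zero_of_natDegree_lt {P : R[X]} (h : P.natDegree < n) : iterFwdDiffAtZero R n P = 0 := by
  rw [apply_eq_fwdDiff, Polynomial.fwdDiff_iter_eq_zero_of_degree_lt h, Pi.zero_apply]

theorem eq_factorial_of_monic {P : R[X]} (hP : P.Monic) (h : P.natDegree = n) :
    iterFwdDiffAtZero R n P = n ! := by
  rw [apply_eq_fwdDiff, ← h, Polynomial.fwdDiff_iter_degree_eq_factorial]
  simp [hP.leadingCoeff]

theorem map_apply {S : Type*} [CommRing S] (f : R →+* S) (P : R[X]) :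
    iterFwdDiffAtZero S n (P.map f) = f (iterFwdDiffAtZero R n P) := by
  simp [apply_eq_sum]

variable (R n) in
theorem X_pow_mul_X_sub_one_pow_eq (a b : ℕ) :
    iterFwdDiffAtZero R n (X ^ a * (X - 1) ^ b) =
      (iterFwdDiffAtZero ℤ n (X ^ a * (X - 1) ^ b) : ℤ) := by
  rw [← eq_intCast (Int.castRingHom R), ← map_apply]
  simp

theorem X_pow_mul_X_sub_one_pow_of_le {a b : ℕ} (h : a + b ≤ n) :
    iterFwdDiffAtZero ℤ n (X ^ a * (X - 1) ^ b) = if a + b = n then (n ! : ℤ) else 0 := by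
  have hmonic : (X ^ a * (X - 1) ^ b : ℤ[X]).Monic :=
    (Polynomial.monic_X_pow a).mul ((Polynomial.monic_X_sub_C 1).pow b)
  have hdeg : (X ^ a * (X - 1) ^ b : ℤ[X]).natDegree = a + b := by
    rw [← Polynomial.C_1, (Polynomial.monic_X_pow a).natDegree_mul
      ((Polynomial.monic_X_sub_C 1).pow b), (Polynomial.monic_X_sub_C 1).natDegree_pow,
      Polynomial.natDegree_X_pow, Polynomial.natDegree_X_sub_C, mul_one]
  split_ifs with hab
  · exact eq_factorial_of_monic hmonic (hdeg.trans hab)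
  · exact eq_zero_of_natDegree_lt (by omega)

theorem mul_comp_X_sub_one_sub_mem {P Q : R[X]} {S : AddSubgroup R}
    (h : ∀ a b, n < a + b → P.coeff a * Q.coeff b ∈ S) :
    iterFwdDiffAtZero R n (P * Q.comp (X - 1)) - n ! * (P * Q).coeff n ∈ S := by
  have hcoeff : (P * Q).coeff n = ∑ a ∈ range (P.natDegree + 1), ∑ b ∈ range (Q.natDegree + 1),
      P.coeff a * Q.coeff b * if a + b = n then 1 else 0 := by
    simpa [← pow_add, Polynomial.finsetSum_coeff, Polynomial.coeff_X_pow, eq_comm] using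
      congrArg (Polynomial.coeff · n) (mul_comp_eq_sum_smul P Q X)
  rw [hcoeff, mul_comp_eq_sum_smul]
  simp only [map_sum, map_smul, mul_sum, ← sum_sub_distrib, X_pow_mul_X_sub_one_pow_eq R n]
  refine sum_mem fun a _ => sum_mem fun b _ => ?_
  rcases le_or_gt (a + b) n with hab | hab
  · rw [X_pow_mul_X_sub_one_pow_of_le hab]
    split_ifs <;> simp [mul_comm]
  · rw [if_neg hab.ne', mul_zero, mul_zero, sub_zero, smul_eq_mul, mul_comm, ← zsmul_eq_mul]
    exact zsmul_mem (h a b hab) _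

end iterFwdDiffAtZero

end FwdDiff

section GeneratingFunction

theorem sum_piFinset_prod_eq_coeff_pow {R : Type*} [CommSemiring R] (s : Finset ℕ) (w : ℕ → R)
    (n N : ℕ) :
    ∑ l ∈ Fintype.piFinset (fun _ : Fin n => s) with ∑ i, l i = N, ∏ i, w (l i) =
      ((∑ m ∈ s, C (w m) * X ^ m) ^ n).coeff N := by
  have hpow : (∑ m ∈ s, C (w m) * X ^ m) ^ n =
      ∑ l ∈ Fintype.piFinset (fun _ : Fin n => s), C (∏ i, w (l i)) * X ^ ∑ i, l i := by
    simp_rw [map_prod, ← prod_pow_eq_pow_sum, ← prod_mul_distrib]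
    rw [← prod_univ_sum (fun _ => s) fun _ m => C (w m) * X ^ m, prod_const, card_univ,
      Fintype.card_fin]
  simp only [hpow, Polynomial.finsetSum_coeff, Polynomial.coeff_C_mul_X_pow, sum_filter, eq_comm]

theorem coeff_two_mul_mul_one_add_X_pow_pow {R : Type*} [CommSemiring R] (A : R[X]) {d : ℕ}
    (hd : d ≠ 0) (k : ℕ) :
    (A * (1 + X ^ d) ^ k).coeff (2 * d) =
      A.coeff (2 * d) + k * A.coeff d + k.choose 2 * A.coeff 0 := by
  induction k generalizing A with
  | zero => simp
  | succ k ih =>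
    have hd' : ¬ d ≤ 0 := by omega
    rw [pow_succ', ← mul_assoc, ih, Nat.choose_succ_succ' k 1, Nat.choose_one_right]
    simp only [mul_add, mul_one, Polynomial.coeff_add, Polynomial.coeff_mul_X_pow', hd', two_mul,
      le_add_iff_nonneg_left, zero_le, le_refl, if_true, if_false, Nat.add_sub_cancel, Nat.sub_self]
    push_cast
    ring

theorem sum_Ico_choose_mul_X_pow (R : Type*) [CommRing R] {m : ℕ} (hm : m ≠ 0) :
    ∑ l ∈ Ico 1 m, C (m.choose l : R) * X ^ l = (1 + X) ^ m - (1 + X ^ m) := by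
  rw [add_comm 1 X, add_pow, sum_range_succ, range_eq_Ico,
    sum_eq_sum_Ico_succ_bot (Nat.pos_of_ne_zero hm)]
  simp [mul_comm]

theorem sum_piFinset_Ico_prod_choose {R : Type*} [CommRing R] {m : ℕ} (hm : m ≠ 0) (n : ℕ) :
    ∑ l ∈ Fintype.piFinset (fun _ : Fin n => Ico 1 m) with ∑ i, l i = 2 * m,
        ∏ i, (m.choose (l i) : R) =
      ∑ j ∈ range (n + 1), (-1) ^ (n - j) * n.choose j * (
        (m * j).choose (2 * m) + (n - j : ℕ) * (m * j).choose m + (n - j).choose 2 : R) := by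
  rw [sum_piFinset_prod_eq_coeff_pow _ (fun l => (m.choose l : R)), sum_Ico_choose_mul_X_pow R hm,
    sub_eq_add_neg, add_pow, Polynomial.finsetSum_coeff]
  refine sum_congr rfl fun j _ => ?_
  have hcoeff := coeff_two_mul_mul_one_add_X_pow_pow ((1 + X : R[X]) ^ (m * j)) hm (n - j)
  simp only [Polynomial.coeff_one_add_X_pow, Nat.choose_zero_right, Nat.cast_one, mul_one] at hcoeff
  have hfactor : ((1 + X) ^ m) ^ j * (-(1 + X ^ m)) ^ (n - j) * (n.choose j : R[X]) =
      C ((-1) ^ (n - j) * (n.choose j : R)) * ((1 + X) ^ (m * j) * (1 + X ^ m) ^ (n - j)) := by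
    rw [neg_pow, ← pow_mul]
    simp only [map_mul, map_pow, map_neg, map_one, map_natCast]
    ring
  rw [hfactor, Polynomial.coeff_C_mul, hcoeff]

end GeneratingFunction

section PrimeBinomials

theorem cast_choose_eq_mul_choose_pred {m l : ℕ} (hm : m ≠ 0) (hl : l ≠ 0) :
    (m.choose l : ℚ) = m * ((m - 1).choose (l - 1) * (1 / l)) := by
  obtain ⟨m, rfl⟩ := Nat.exists_eq_succ_of_ne_zero hm
  obtain ⟨l, rfl⟩ := Nat.exists_eq_succ_of_ne_zero hl
  have := Nat.add_one_mul_choose_eq m l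
  field_simp
  exact_mod_cast this.symm

variable {p : ℕ} [Fact p.Prime]

theorem neg_one_pow_mul_choose_prime_pred_modEq {k : ℕ} (hk : k < p) :
    (-1) ^ k * ((p - 1).choose k : ℤ) ≡ 1 [ZMOD p] := by
  have hp : p.Prime := Fact.out
  have hdvd : (p : ℤ) ∣ ∑ i ∈ range k, (-1) ^ (i + 1) * (p.choose (i + 1) : ℤ) :=
    dvd_sum fun i hi => (Int.natCast_dvd_natCast.2 (hp.dvd_choose_self i.succ_ne_zero
      (by have := mem_range.1 hi; omega))).mul_left _
  rw [← Int.alternating_sum_range_choose_eq_choose, Nat.sub_add_cancel hp.one_le,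
    sum_range_succ', Nat.choose_zero_right, Int.modEq_iff_dvd]
  simpa using hdvd

theorem prod_choose_prime_pred_modEq_one {n : ℕ} (hn : Even n) {l : Fin n → ℕ}
    (hl : ∀ i, l i ∈ Ico 1 p) (hsum : Even (∑ i, l i)) :
    ∏ i, ((p - 1).choose (l i - 1) : ℤ) ≡ 1 [ZMOD p] := by
  have hsign : ∏ i, (-1 : ℤ) ^ (l i - 1) = 1 := by
    have hcard : ∑ i, (l i - 1) + n = ∑ i, l i := by
      simpa [sum_add_distrib] using
        sum_congr rfl fun i (_ : i ∈ univ) => Nat.sub_add_cancel (mem_Ico.1 (hl i)).1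
    rw [prod_pow_eq_pow_sum, Even.neg_one_pow]
    rwa [← hcard, Nat.even_add, iff_true_right hn] at hsum
  have hprod : ∏ i, (-1) ^ (l i - 1) * ((p - 1).choose (l i - 1) : ℤ) ≡ ∏ _i : Fin n, 1 [ZMOD p] :=
    Int.ModEq.prod fun i _ => neg_one_pow_mul_choose_prime_pred_modEq
      (by have := mem_Ico.1 (hl i); omega)
  rwa [prod_mul_distrib, hsign, one_mul, prod_const_one] at hprod

theorem prod_one_div_mem_padicIdeal_zero {n : ℕ} {l : Fin n → ℕ} (hl : ∀ i, l i ∈ Ico 1 p) :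
    ∏ i, (1 : ℚ) / l i ∈ padicIdeal p 0 := by
  refine prod_induction _ (· ∈ padicIdeal p 0) (fun _ _ => padicIdeal.mul_mem)
    (mod_cast padicIdeal.natCast_mem_zero 1) fun i _ => ?_
  obtain ⟨hpos, hlt⟩ := mem_Ico.1 (hl i)
  rw [one_div]
  exact padicIdeal.inv_natCast_mem_zero (Nat.not_dvd_of_pos_of_lt hpos hlt)

theorem hsumLt_mem_padicIdeal_zero (n N : ℕ) : hsumLt p n N ∈ padicIdeal p 0 :=
  sum_mem fun _ hl =>
    prod_one_div_mem_padicIdeal_zero (Fintype.mem_piFinset.1 (mem_filter.1 hl).1)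

theorem pow_mul_hsumLt_smodEq {n N : ℕ} (hn : Even n) (hN : Even N) :
    p ^ n * hsumLt p n N ≡
      ∑ l ∈ Fintype.piFinset (fun _ : Fin n => Ico 1 p) with ∑ i, l i = N, ∏ i, (p.choose (l i) : ℚ)
      [SMOD padicIdeal p (n + 1)] := by
  rw [hsumLt, mul_sum]
  refine SModEq.sum fun l hl => SModEq.symm ?_
  obtain ⟨hl, hsum⟩ := mem_filter.1 hl
  rw [Fintype.mem_piFinset] at hl
  have hcong := padicIdeal.intCast_mem_one_iff.2
    (prod_choose_prime_pred_modEq_one hn hl (hsum ▸ hN)).symm.dvd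
  have hchoose : ∏ i, (p.choose (l i) : ℚ) =
      p ^ n * ((∏ i, ((p - 1).choose (l i - 1) : ℚ)) * ∏ i, (1 : ℚ) / l i) := by
    simp_rw [fun i => cast_choose_eq_mul_choose_pred (NeZero.ne p)
      (Nat.ne_zero_of_lt (mem_Ico.1 (hl i)).1), prod_mul_distrib]
    simp
  rw [hchoose, SModEq.sub_mem, ← mul_sub, padicIdeal.pow_mul_mem_iff]
  convert padicIdeal.mul_mem_right hcong (prod_one_div_mem_padicIdeal_zero hl) using 1
  push_cast
  ring

theorem centralBinom_prime_modEq : (p.centralBinom : ℤ) ≡ 2 [ZMOD p ^ 2] := by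
  have hp : p.Prime := Fact.out
  have hdvd : (p : ℤ) ^ 2 ∣ ∑ i ∈ Ico 1 p, (p.choose i : ℤ) ^ 2 := by
    refine dvd_sum fun i hi => pow_dvd_pow_of_dvd (Int.natCast_dvd_natCast.2 ?_) 2
    rw [mem_Ico] at hi
    exact hp.dvd_choose_self (by omega) hi.2
  have hvandermonde : (p.centralBinom : ℤ) = ∑ i ∈ Ico 1 p, (p.choose i : ℤ) ^ 2 + 2 := by
    have h := Nat.sum_range_choose_sq p
    rw [sum_range_succ, range_eq_Ico, sum_eq_sum_Ico_succ_bot hp.pos] at h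
    rw [Nat.centralBinom, ← h]
    push_cast
    simp only [Nat.choose_zero_right, Nat.cast_one, one_pow, Nat.choose_self]
    ring
  rw [hvandermonde, Int.modEq_comm, Int.modEq_iff_dvd, add_sub_cancel_right]
  exact hdvd

theorem two_sub_centralBinom_mem : (2 - p.centralBinom : ℚ) ∈ padicIdeal p 2 := by
  exact_mod_cast padicIdeal.intCast_mem_of_dvd centralBinom_prime_modEq.dvd

end PrimeBinomials

section FiniteDifference

/-- The linear correction `Q` of `P = chooseMulPoly k` for which `P(j) * Q(j - 1)` equals
`k.centralBinom * ((k * j).choose (2 * k) + (n - j) * (k * j).choose k)` at natural `j`. -/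
noncomputable def correctedChooseMulPoly (k n : ℕ) : ℚ[X] :=
  chooseMulPoly k + C (k.centralBinom : ℚ) * (C (n - 1 : ℚ) - X)

theorem centralBinom_mul_sum_prod_choose {m n : ℕ} (hm : m ≠ 0) (hn : 2 < n) :
    m.centralBinom *
        ∑ l ∈ Fintype.piFinset (fun _ : Fin n => Ico 1 m) with ∑ i, l i = 2 * m,
          ∏ i, (m.choose (l i) : ℚ) =
      iterFwdDiffAtZero ℚ n (chooseMulPoly m * (correctedChooseMulPoly m n).comp (X - 1)) := by
  -- `q` interpolates `(n - j).choose 2`.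
  set q : ℚ[X] := C (2⁻¹ : ℚ) * ((C (n : ℚ) - X) * (C (n - 1 : ℚ) - X))
  have hq : iterFwdDiffAtZero ℚ n q = 0 := by
    refine iterFwdDiffAtZero.eq_zero_of_natDegree_lt (lt_of_le_of_lt ?_ hn)
    simp only [q]
    compute_degree
  rw [← add_zero (iterFwdDiffAtZero ℚ n _), ← mul_zero (m.centralBinom : ℚ), ← hq,
    sum_piFinset_Ico_prod_choose hm, iterFwdDiffAtZero.apply_eq_sum,
    iterFwdDiffAtZero.apply_eq_sum, mul_sum, mul_sum, ← sum_add_distrib]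
  refine sum_congr rfl fun j hj => ?_
  have hjn : j ≤ n := Nat.lt_succ_iff.1 (mem_range.1 hj)
  have hprod := chooseMulPoly.eval_natCast_mul_eval_natCast_sub_one m j
  simp only [correctedChooseMulPoly, q, Polynomial.eval_mul, Polynomial.eval_comp,
    Polynomial.eval_add, Polynomial.eval_sub, Polynomial.eval_C, Polynomial.eval_X,
    Polynomial.eval_one, chooseMulPoly.eval_natCast,
    Nat.cast_choose_two, Nat.cast_sub hjn] at hprod ⊢
  linear_combination (-((-1) ^ (n - j) * n.choose j : ℚ)) * hprod

end FiniteDifference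

section Congruence

variable {p n : ℕ} [Fact p.Prime]

namespace correctedChooseMulPoly

theorem coeff_eq (k n m : ℕ) :
    (correctedChooseMulPoly k n).coeff m = (chooseMulPoly k).coeff m +
      k.centralBinom * ((if m = 0 then (n : ℚ) - 1 else 0) - if 1 = m then 1 else 0) := by
  simp only [correctedChooseMulPoly, Polynomial.coeff_add, Polynomial.coeff_C_mul,
    Polynomial.coeff_sub, Polynomial.coeff_C, Polynomial.coeff_X]

theorem coeff_one {k : ℕ} (hk : Odd k) (n : ℕ) :
    (correctedChooseMulPoly k n).coeff 1 = 1 - k.centralBinom := by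
  rw [coeff_eq, chooseMulPoly.coeff_one hk.pos.ne', (hk.tsub_odd odd_one).neg_one_pow]
  simp [sub_eq_add_neg]

theorem coeff_of_one_lt (k n : ℕ) {m : ℕ} (hm : 1 < m) :
    (correctedChooseMulPoly k n).coeff m = (chooseMulPoly k).coeff m := by
  rw [coeff_eq, if_neg (Nat.ne_zero_of_lt hm), if_neg hm.ne, sub_zero, mul_zero, add_zero]

theorem coeff_mem_zero (m : ℕ) : (correctedChooseMulPoly p n).coeff m ∈ padicIdeal p 0 := by
  have hint : (correctedChooseMulPoly p n).coeff m = (chooseMulPoly p).coeff m +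
      (p.centralBinom * ((if m = 0 then (n : ℤ) - 1 else 0) - if 1 = m then 1 else 0) : ℤ) := by
    rw [coeff_eq]
    push_cast
    rfl
  rw [hint]
  exact add_mem (chooseMulPoly.coeff_mem_zero m) (padicIdeal.intCast_mem_zero _)

theorem coeff_mul_coeff_mem (hn : Even n) (hn₂ : 2 ≤ n) (hnp : n + 2 < p) {a b : ℕ}
    (hab : n < a + b) :
    (chooseMulPoly p).coeff a * (correctedChooseMulPoly p n).coeff b ∈ padicIdeal p (n + 1) := by
  rcases le_or_gt n a with ha | ha
  · exact padicIdeal.mul_mem_right (chooseMulPoly.coeff_mem_succ_of_even hn hn₂ hnp ha)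
      (coeff_mem_zero b)
  rw [coeff_of_one_lt p n (by omega)]
  rcases le_or_gt n b with hb | hb
  · exact padicIdeal.mul_mem_left (chooseMulPoly.coeff_mem_zero a)
      (chooseMulPoly.coeff_mem_succ_of_even hn hn₂ hnp hb)
  · exact padicIdeal.antitone hab (padicIdeal.mul_mem
      (chooseMulPoly.coeff_mem (by omega) (by omega))
      (chooseMulPoly.coeff_mem (by omega) (by omega)))

theorem coeff_mul_eq_sum_add {k n : ℕ} (hk : Odd k) (hn : 4 ≤ n) :
    (chooseMulPoly k * correctedChooseMulPoly k n).coeff n =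
      ∑ a ∈ Icc 2 (n - 2), (chooseMulPoly k).coeff a * (chooseMulPoly k).coeff (n - a) +
        ((2 - k.centralBinom) * (chooseMulPoly k).coeff (n - 1) +
          (chooseMulPoly k).coeff n * (correctedChooseMulPoly k n).coeff 0) := by
  obtain ⟨m, rfl⟩ := Nat.exists_eq_add_of_le' hn
  have hinner :
      ∑ a ∈ Icc 2 (m + 2), (chooseMulPoly k).coeff a * (chooseMulPoly k).coeff (m + 4 - a) =
      ∑ a ∈ Ico 2 (m + 3),
        (chooseMulPoly k).coeff a * (correctedChooseMulPoly k (m + 4)).coeff (m + 4 - a) :=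
    sum_congr rfl fun a ha => by
      rw [coeff_of_one_lt _ _ (by have := mem_Icc.1 ha; omega)]
  rw [Polynomial.coeff_mul, Nat.sum_antidiagonal_eq_sum_range_succ_mk, range_eq_Ico,
    sum_eq_sum_Ico_succ_bot (by omega), sum_eq_sum_Ico_succ_bot (by omega),
    sum_Ico_succ_top (by omega), sum_Ico_succ_top (by omega)]
  simp only [Nat.add_sub_cancel_left, Nat.reduceSubDiff, zero_add, Nat.reduceAdd, hinner,
    chooseMulPoly.coeff_zero hk.pos.ne', chooseMulPoly.coeff_one hk.pos.ne',
    (hk.tsub_odd odd_one).neg_one_pow, Nat.sub_self]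
  rw [coeff_of_one_lt k (m + 4) (m := m + 3) (by omega), coeff_one hk]
  ring

theorem coeff_mul_smodEq_sum (hn : Even n) (hn₄ : 4 ≤ n) (hnp : n + 2 < p) :
    (chooseMulPoly p * correctedChooseMulPoly p n).coeff n ≡
      p ^ n * ∑ a ∈ Icc 2 (n - 2), bernoulli (p - a) * bernoulli (p - n + a) / ((a : ℚ) * (n - a))
      [SMOD padicIdeal p (n + 1)] := by
  have hp : Odd p := (Fact.out : p.Prime).odd_of_ne_two (by omega)
  have hboundary : (2 - p.centralBinom) * (chooseMulPoly p).coeff (n - 1) +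
      (chooseMulPoly p).coeff n * (correctedChooseMulPoly p n).coeff 0 ∈ padicIdeal p (n + 1) := by
    refine add_mem ?_ (padicIdeal.mul_mem_right
      (chooseMulPoly.coeff_mem_succ_of_even hn (by omega) hnp le_rfl)
      (coeff_mem_zero 0))
    exact padicIdeal.antitone (by omega) (padicIdeal.mul_mem two_sub_centralBinom_mem
      (chooseMulPoly.coeff_mem (by omega) (by omega)))
  rw [coeff_mul_eq_sum_add hp hn₄, mul_sum, ← add_zero (∑ a ∈ Icc 2 (n - 2), (p : ℚ) ^ n * _)]
  refine SModEq.add (SModEq.sum fun a ha => ?_) (SModEq.zero.2 hboundary)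
  obtain ⟨ha₂, han⟩ := mem_Icc.1 ha
  have hab : a + (n - a) = n := by omega
  have hmain := chooseMulPoly.coeff_mul_coeff_smodEq (p := p) (a := a) (b := n - a)
    (by omega) (by omega) (by omega) (by omega)
  rwa [hab, Nat.cast_sub (by omega), show p - (n - a) = p - n + a by omega] at hmain

end correctedChooseMulPoly

theorem centralBinom_mul_hsumLt_smodEq (hn : Even n) (hn₄ : 4 ≤ n) (hnp : n + 2 < p) :
    p.centralBinom * hsumLt p n (2 * p) ≡
      n ! * ∑ a ∈ Icc 2 (n - 2), bernoulli (p - a) * bernoulli (p - n + a) / ((a : ℚ) * (n - a))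
      [SMOD padicIdeal p 1] := by
  have hchoose := padicIdeal.mul_mem_left (padicIdeal.natCast_mem_zero p.centralBinom)
    (SModEq.sub_mem.1 (pow_mul_hsumLt_smodEq (p := p) hn (even_two_mul p)))
  have hdiff := iterFwdDiffAtZero.mul_comp_X_sub_one_sub_mem
    (S := (padicIdeal p (n + 1)).toAddSubgroup)
    fun a b => correctedChooseMulPoly.coeff_mul_coeff_mem (a := a) (b := b) hn (by omega) hnp
  rw [← centralBinom_mul_sum_prod_choose (NeZero.ne p) (by omega)] at hdiff
  have hcoeff := padicIdeal.mul_mem_left (padicIdeal.natCast_mem_zero n !)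
    (SModEq.sub_mem.1 (correctedChooseMulPoly.coeff_mul_smodEq_sum (p := p) hn hn₄ hnp))
  rw [SModEq.sub_mem, ← padicIdeal.pow_mul_mem_iff (k := n)]
  convert add_mem (add_mem hchoose hdiff) hcoeff using 1
  ring

theorem hsumLt_smodEq (hn : Even n) (hn₄ : 4 ≤ n) (hnp : n + 2 < p) :
    hsumLt p n (2 * p) ≡ n ! / 2 *
      ∑ a ∈ Icc 2 (n - 2), bernoulli (p - a) * bernoulli (p - n + a) / ((a : ℚ) * (n - a))
      [SMOD padicIdeal p 1] := by
  have h2 : ¬ (p : ℤ) ∣ 2 := mod_cast Nat.not_dvd_of_pos_of_lt two_pos (by omega)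
  rw [SModEq.sub_mem, ← padicIdeal.mul_mem_iff_of_not_dvd h2]
  have hcentral := padicIdeal.mul_mem_right
    (padicIdeal.antitone one_le_two two_sub_centralBinom_mem)
    (hsumLt_mem_padicIdeal_zero (p := p) n (2 * p))
  convert add_mem hcentral (SModEq.sub_mem.1 (centralBinom_mul_hsumLt_smodEq hn hn₄ hnp)) using 1
  push_cast
  ring

end Congruence

theorem hsumLt_eq_zero_of_mul_lt {p n N : ℕ} (h : n * (p - 1) < N) : hsumLt p n N = 0 := by
  rw [hsumLt, filter_eq_empty_iff.2, sum_empty]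
  rintro l hl rfl
  refine h.not_ge ?_
  have hle : ∀ i ∈ univ, l i ≤ p - 1 := fun i _ =>
    Nat.le_sub_one_of_lt (mem_Ico.1 (Fintype.mem_piFinset.1 hl i)).2
  simpa using sum_le_card_nsmul univ l (p - 1) hle

theorem sum_filter_odd_bernoulli_mul_bernoulli {p n : ℕ} (hp : Odd p) (hnp : n < p) :
    ∑ a ∈ (Icc 2 (n - 2)).filter (fun a => Odd a),
        bernoulli (p - a) * bernoulli (p - n + a) / ((a : ℚ) * (n - a)) =
      ∑ a ∈ Icc 2 (n - 2), bernoulli (p - a) * bernoulli (p - n + a) / ((a : ℚ) * (n - a)) := by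
  refine sum_filter_of_ne fun a ha hne => Nat.not_even_iff_odd.1 fun heven => hne ?_
  obtain ⟨ha₂, han⟩ := mem_Icc.1 ha
  rw [bernoulli_eq_zero_of_odd (Nat.Odd.sub_even (by omega) hp heven) (by omega), zero_mul,
    zero_div]

theorem stmt_11 (p n : ℕ) (hn : Even n) (hp : p.Prime) (hpn : n + 2 < p) :
    ratCong p 1 (hsumLt p n (2 * p))
      ((Nat.factorial n : ℚ) / 2 *
        ∑ a ∈ (Finset.Icc 2 (n - 2)).filter (fun a => Odd a),
          bernoulli (p - a) * bernoulli (p - n + a) / ((a : ℚ) * (n - a))) := by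
  have : Fact p.Prime := ⟨hp⟩
  have hp_odd : Odd p := hp.odd_of_ne_two (by omega)
  rw [ratCong_iff_smodEq, sum_filter_odd_bernoulli_mul_bernoulli hp_odd (by omega)]
  rcases lt_or_ge n 4 with hn₄ | hn₄
  · have hn₂ : n ≤ 2 := by obtain ⟨k, rfl⟩ := hn; omega
    have hsmall : n * (p - 1) < 2 * p := (Nat.mul_le_mul_right _ hn₂).trans_lt (by omega)
    rw [hsumLt_eq_zero_of_mul_lt hsmall, Icc_eq_empty (by omega), sum_empty, mul_zero]
  · exact hsumLt_smodEq hn hn₄ hpn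
end
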